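/- arXiv:2405.04501 — 3 statements merged into one kernel-verified Lean document; each statement's English description precedes it below -/
import Mathlib

section
/- Let d = 3. There exist a real constant c_* with c_* < 3^{2/3}/(2·(4π)^{2/3}) and n_0 ∈ ℕ such that for all n ≥ n_0 and every y ∈ ℤ³ satisfying max_i |y_i| = ⌊n/2⌋ and |y_i| ≤ ⌊n/2⌋ for all i (i.e. y lies on the boundary of the cube [−⌊n/2⌋, ⌊n/2⌋]³), one has n·G_n^0(0, ȳ) ≤ c_*. -/
open MeasureTheory ProbabilityTheory Filter Topology Matrix
open scoped Classical ENNReal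

noncomputable section

/-- The massive lattice Green's function `G_{ℤ^d, m²}(x, y)`. -/
def massGreenZ (d : ℕ) (m2 : ℝ) (x y : Fin d → ℤ) : ℝ :=
  ∫ t in Set.Icc (0 : Fin d → ℝ) 1,
    Real.cos (2 * Real.pi * ∑ i, ((x i : ℝ) - (y i : ℝ)) * t i) /
      (m2 + 2 * ∑ i, (1 - Real.cos (2 * Real.pi * t i)))

/-- The lattice Green's function `G_{ℤ^d}(x, y)` (for `d ≥ 3`). -/
def greenZ (d : ℕ) (x y : Fin d → ℤ) : ℝ := massGreenZ d 0 x y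

/-- The critical inverse temperature `β_c = G_{ℤ^d}(0, 0)`. -/
def betaC (d : ℕ) : ℝ := greenZ d 0 0

/-- The eigenvalues `η_w = 2 ∑_i (1 − cos(2π w_i / n))` of the discrete Laplacian on the
torus `T_n^d`. -/
def eta (d n : ℕ) (w : Fin d → Fin n) : ℝ :=
  2 * ∑ i, (1 - Real.cos (2 * Real.pi * ((w i : ℕ) : ℝ) / n))

/-- The massive Green's function `G_{n,m²}(x,y)` on the torus `T_n^d`. -/
def torusGreen (d n : ℕ) (m2 : ℝ) (x y : Fin d → ZMod n) : ℝ :=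
  (1 / (n : ℝ) ^ d) * ∑ w : Fin d → Fin n,
    Real.cos (2 * Real.pi * (∑ i, ((w i : ℕ) : ℝ) * ((x i - y i).val : ℝ)) / n) /
      (m2 + eta d n w)

/-- The zero-average Green's function `G_n^0(x,y)` on the torus `T_n^d` (`d ≥ 3`). -/
def torusGreen0 (d n : ℕ) (x y : Fin d → ZMod n) : ℝ :=
  (1 / (n : ℝ) ^ d) *
    ∑ w ∈ Finset.univ.filter (fun w : Fin d → Fin n => ∃ i, (w i : ℕ) ≠ 0),
      Real.cos (2 * Real.pi * (∑ i, ((w i : ℕ) : ℝ) * ((x i - y i).val : ℝ)) / n) / eta d n w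


/-- One-dimensional massive cycle sum. -/
def cycSum (n : ℕ) (a y : ℝ) : ℝ :=
  ∑ w ∈ Finset.range n, Real.cos (2 * Real.pi * (w * y) / n) /
    (a + 2 * (1 - Real.cos (2 * Real.pi * w / n)))

lemma orth_cos (n y : ℕ) (hy : 0 < y) (hyn : y < n) :
    ∑ w ∈ Finset.range n, Real.cos (2 * Real.pi * (w * (y : ℝ)) / n) = 0 := by
  have hn : (n : ℂ) ≠ 0 := by
    have : n ≠ 0 := by omega
    exact_mod_cast this
  have hp := Complex.isPrimitiveRoot_exp n (by omega)
  set z := Complex.exp (2 * Real.pi * Complex.I / n) with hz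
  have h1 : z ^ y ≠ 1 := hp.pow_ne_one_of_pos_of_lt (by omega) hyn
  have h2 : ∑ w ∈ Finset.range n, (z ^ y) ^ w = 0 := by
    rw [geom_sum_eq h1]
    rw [← pow_mul, mul_comm, pow_mul, hp.pow_eq_one]; simp
  have h3 := congrArg Complex.re h2
  rw [Complex.re_sum] at h3
  rw [Complex.zero_re] at h3
  rw [← h3]
  apply Finset.sum_congr rfl
  intro w _
  rw [hz, ← Complex.exp_nat_mul, ← Complex.exp_nat_mul]
  have : (w : ℂ) * ((y : ℂ) * (2 * Real.pi * Complex.I / n))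
      = ((2 * Real.pi * (w * (y : ℝ)) / n : ℝ) : ℂ) * Complex.I := by
    push_cast; ring
  rw [this, Complex.exp_ofReal_mul_I_re]

lemma cycSum_symm (n : ℕ) (hn : 0 < n) (a y : ℝ) : cycSum n a (n - y) = cycSum n a y := by
  unfold cycSum
  apply Finset.sum_congr rfl
  intro w _
  congr 1
  have hn' : (n : ℝ) ≠ 0 := by positivity
  have : 2 * Real.pi * (w * ((n : ℝ) - y)) / n = (w : ℝ) * (2 * Real.pi) - 2 * Real.pi * (w * y) / n := by
    field_simp
  rw [this, Real.cos_nat_mul_two_pi_sub]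

lemma cyc_den_pos (n w : ℕ) (a : ℝ) (ha : 0 < a) :
    0 < a + 2 * (1 - Real.cos (2 * Real.pi * w / n)) := by
  have := Real.cos_le_one (2 * Real.pi * w / n)
  linarith

lemma cycSum_rec (n : ℕ) (a y : ℝ) (ha : 0 < a) :
    (2 + a) * cycSum n a y - cycSum n a (y + 1) - cycSum n a (y - 1)
      = ∑ w ∈ Finset.range n, Real.cos (2 * Real.pi * (w * y) / n) := by
  unfold cycSum
  rw [Finset.mul_sum, ← Finset.sum_sub_distrib, ← Finset.sum_sub_distrib]
  apply Finset.sum_congr rfl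
  intro w _
  have hd := (cyc_den_pos n w a ha).ne'
  have e1 : 2 * Real.pi * (w * (y + 1)) / n = 2 * Real.pi * (w * y) / n + 2 * Real.pi * w / n := by ring
  have e2 : 2 * Real.pi * (w * (y - 1)) / n = 2 * Real.pi * (w * y) / n - 2 * Real.pi * w / n := by ring
  rw [e1, e2, Real.cos_add, Real.cos_sub]
  field_simp
  ring

lemma cycSum_rec_mid (n y : ℕ) (a : ℝ) (ha : 0 < a) (hy : 0 < y) (hyn : y < n) :
    cycSum n a (y + 1) = (2 + a) * cycSum n a y - cycSum n a (y - 1) := by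
  have := cycSum_rec n a y ha
  rw [orth_cos n y hy hyn] at this
  linarith

lemma cycSum_rec_zero (n : ℕ) (hn : 0 < n) (a : ℝ) (ha : 0 < a) :
    (2 + a) * cycSum n a n - 2 * cycSum n a (n - 1) = n := by
  have := cycSum_rec n a 0 ha
  have h1 : cycSum n a n = cycSum n a 0 := by
    have := cycSum_symm n hn a 0
    simpa using this
  have h2 := cycSum_symm n hn a 1
  have h3 : cycSum n a (0 - 1) = cycSum n a (0 + 1) := by
    unfold cycSum
    apply Finset.sum_congr rfl
    intro w _
    congr 1
    rw [← Real.cos_neg]; congr 1; ring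
  rw [h3] at this
  rw [h1, h2]
  simp only [mul_zero, zero_div, Real.cos_zero, Finset.sum_const, Finset.card_range, nsmul_eq_mul, mul_one] at this
  rw [zero_add] at this
  linarith

lemma cosh_step (x u : ℝ) :
    (2 + 4 * Real.sinh u ^ 2) * Real.cosh x = Real.cosh (x + 2 * u) + Real.cosh (x - 2 * u) := by
  rw [Real.cosh_add, Real.cosh_sub, Real.cosh_two_mul, Real.cosh_sq]
  ring

lemma cycSum_claim (n : ℕ) (hn : 2 ≤ n) (u : ℝ) (hu : 0 < u) (j : ℕ) :
    (n / 2 + j + 1 ≤ n) →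
    (cycSum n (4 * Real.sinh u ^ 2) ((n / 2 : ℕ) + j) * Real.cosh ((2 * (n / 2 : ℕ) - n) * u)
      = cycSum n (4 * Real.sinh u ^ 2) ((n / 2 : ℕ)) * Real.cosh ((2 * ((n / 2 : ℕ) + j) - n) * u)) ∧
    (cycSum n (4 * Real.sinh u ^ 2) ((n / 2 : ℕ) + j + 1) * Real.cosh ((2 * (n / 2 : ℕ) - n) * u)
      = cycSum n (4 * Real.sinh u ^ 2) ((n / 2 : ℕ)) * Real.cosh ((2 * ((n / 2 : ℕ) + j + 1) - n) * u)) := by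
  have ha : 0 < 4 * Real.sinh u ^ 2 := by
    have := Real.sinh_pos_iff.2 hu
    positivity
  set a := 4 * Real.sinh u ^ 2 with hadef
  induction j with
  | zero =>
    intro _
    refine ⟨by simp, ?_⟩
    simp only [Nat.cast_zero, add_zero]
    rcases Nat.even_or_odd' n with ⟨k, hk | hk⟩
    · have hk2 : n / 2 = k := by omega
      have hnk : (n : ℝ) = 2 * k := by rw [hk]; push_cast; ring
      rw [hk2]
      have h1 := cycSum_rec_mid n k a ha (by omega) (by omega)
      have h2 := cycSum_symm n (by omega) a (k + 1)
      have h3 : (n : ℝ) - (k + 1) = k - 1 := by rw [hnk]; ring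
      rw [h3] at h2
      have e1 : (2 * (k : ℝ) - n) * u = 0 := by rw [hnk]; ring
      have e2 : (2 * ((k : ℝ) + 1) - n) * u = 2 * u := by rw [hnk]; ring
      rw [e1, e2, Real.cosh_zero, Real.cosh_two_mul, Real.cosh_sq]
      rw [hadef] at h1 h2 ⊢
      linarith
    · have hk2 : n / 2 = k := by omega
      have hnk : (n : ℝ) = 2 * k + 1 := by rw [hk]; push_cast; ring
      rw [hk2]
      have h2 := cycSum_symm n (by omega) a k
      have h3 : (n : ℝ) - k = k + 1 := by rw [hnk]; ring
      rw [h3] at h2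
      have e1 : (2 * (k : ℝ) - n) * u = -u := by rw [hnk]; ring
      have e2 : (2 * ((k : ℝ) + 1) - n) * u = u := by rw [hnk]; ring
      rw [e1, e2, Real.cosh_neg, h2]
  | succ j ih =>
    intro hj
    obtain ⟨i1, i2⟩ := ih (by omega)
    push_cast
    rw [← add_assoc ((n / 2 : ℕ) : ℝ)]
    refine ⟨i2, ?_⟩
    have h1 := cycSum_rec_mid n (n / 2 + j + 1) a ha (by omega) (by omega)
    push_cast at h1
    rw [show ((n / 2 : ℕ) : ℝ) + j + 1 - 1 = (n / 2 : ℕ) + j by ring] at h1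
    have h2 := cosh_step ((2 * ((n / 2 : ℕ) + j + 1) - n) * u) u
    rw [h1]
    rw [show (2 * (((n / 2 : ℕ) : ℝ) + j + 1 + 1) - n) * u = (2 * ((n / 2 : ℕ) + j + 1) - n) * u + 2 * u by ring]
    rw [show (2 * (((n / 2 : ℕ) : ℝ) + j + 1) - n) * u - 2 * u = (2 * ((n / 2 : ℕ) + j) - n) * u by ring, ← hadef] at h2
    have h4 : Real.cosh ((2 * (((n / 2 : ℕ) : ℝ) + j + 1) - n) * u + 2 * u) = 
      (2 + a) * Real.cosh ((2 * ((n / 2 : ℕ) + j + 1) - n) * u) - Real.cosh ((2 * ((n / 2 : ℕ) + j) - n) * u) := by linarith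
    rw [h4]
    linear_combination (2 + a) * i2 - i1

lemma cycSum_bound (n : ℕ) (hn : 2 ≤ n) (u : ℝ) (hu : 0 < u) :
    0 < cycSum n (4 * Real.sinh u ^ 2) ((n / 2 : ℕ)) ∧
    cycSum n (4 * Real.sinh u ^ 2) ((n / 2 : ℕ)) ≤ n / (4 * Real.sinh u * Real.sinh (n * u)) := by
  have hs := Real.sinh_pos_iff.2 hu
  have hn0 : (0 : ℝ) < n := by positivity
  have hs2 := Real.sinh_pos_iff.2 (mul_pos hn0 hu)
  have ha : 0 < 4 * Real.sinh u ^ 2 := by positivity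
  obtain ⟨c1, c2⟩ := cycSum_claim n hn u hu (n - n / 2 - 1) (by omega)
  have h0 := cycSum_rec_zero n (by omega) _ ha
  have e : ((n / 2 : ℕ) : ℝ) + ((n - n / 2 - 1 : ℕ) : ℝ) = n - 1 := by
    have : n / 2 + (n - n / 2 - 1) + 1 = n := by omega
    have h : ((n / 2 + (n - n / 2 - 1) + 1 : ℕ) : ℝ) = n := by rw [this]
    push_cast at h ⊢
    linarith
  rw [e] at c1 c2
  rw [sub_add_cancel] at c2
  set C := cycSum n (4 * Real.sinh u ^ 2) ((n / 2 : ℕ))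
  set K := Real.cosh ((2 * (n / 2 : ℕ) - n) * u) with hK
  have hKle : K ≤ Real.cosh u := by
    rw [hK]
    apply Real.cosh_le_cosh.2
    rw [abs_mul]
    have : |2 * ((n / 2 : ℕ) : ℝ) - n| ≤ 1 := by
      have h1 : ((2 * (n / 2) : ℕ) : ℝ) ≤ n := by exact_mod_cast (by omega : 2 * (n / 2) ≤ n)
      have h2 : (n : ℝ) ≤ ((2 * (n / 2) + 1 : ℕ) : ℝ) := by exact_mod_cast (by omega : n ≤ 2 * (n / 2) + 1)
      push_cast at h1 h2
      rw [abs_le]; constructor <;> linarith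
    nlinarith [abs_nonneg u]
  have hKpos : 0 < K := Real.cosh_pos _
  have key : (n : ℝ) * K = C * (4 * Real.sinh u * Real.sinh (n * u)) * Real.cosh u := by
    have e1 : (2 * (n : ℝ) - n) * u = n * u := by ring
    have e2 : (2 * ((n : ℝ) - 1) - n) * u = n * u - 2 * u := by ring
    rw [e1] at c2
    rw [e2] at c1
    rw [Real.cosh_sub, Real.cosh_two_mul, Real.sinh_two_mul, Real.cosh_sq u] at c1
    linear_combination (-K) * h0 + (2 + 4 * Real.sinh u ^ 2) * c2 - 2 * c1
  have hcu := Real.cosh_pos u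
  have hD : 0 < 4 * Real.sinh u * Real.sinh (n * u) := by positivity
  refine ⟨?_, ?_⟩
  · have : 0 < C * (4 * Real.sinh u * Real.sinh (n * u) * Real.cosh u) := by
      rw [← mul_assoc, ← key]; positivity
    exact (pos_iff_pos_of_mul_pos this).2 (by positivity)
  · rw [le_div_iff₀ hD]
    have : C * (4 * Real.sinh u * Real.sinh (n * u)) * Real.cosh u ≤ n * Real.cosh u := by
      rw [← key]; gcongr
    exact le_of_mul_le_mul_right this hcu

lemma nat_mul_sinh_le (n : ℕ) (u : ℝ) (hu : 0 ≤ u) : n * Real.sinh u ≤ Real.sinh (n * u) := by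
  induction n with
  | zero => simp
  | succ k ih =>
    push_cast
    rw [add_mul, one_mul, add_mul, one_mul, Real.sinh_add]
    have h1 := Real.one_le_cosh u
    have h2 := Real.one_le_cosh (k * u)
    have h3 := Real.sinh_nonneg_iff.2 hu
    have h4 : 0 ≤ Real.sinh (k * u) := Real.sinh_nonneg_iff.2 (by positivity)
    nlinarith

/-- zero mode: the junk term at `w = 0` is `1/0 = 0`. -/
lemma cycSum_zero (n : ℕ) (hn : 2 ≤ n) : cycSum n 0 ((n / 2 : ℕ)) ≤ 0 := by
  obtain ⟨k, rfl⟩ : ∃ k, n = k + 1 := ⟨n - 1, by omega⟩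
  set y : ℝ := (((k + 1) / 2 : ℕ) : ℝ) with hy
  let F : ℝ → ℝ := fun a => ∑ w ∈ Finset.range k, Real.cos (2 * Real.pi * ((w + 1 : ℕ) * y) / (k + 1 : ℕ)) /
    (a + 2 * (1 - Real.cos (2 * Real.pi * (w + 1 : ℕ) / (k + 1 : ℕ))))
  have hF : ∀ a, cycSum (k + 1) a y = F a + 1 / a := by
    intro a
    unfold cycSum
    rw [Finset.sum_range_succ']
    simp [F]
  have hcont : ContinuousAt F 0 := by
    apply tendsto_finsetSum
    intro w hw
    have hw := Finset.mem_range.1 hw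
    apply ContinuousAt.div continuousAt_const (by fun_prop)
    have : Real.cos (2 * Real.pi * (w + 1 : ℕ) / (k + 1 : ℕ)) ≠ 1 := by
      intro h
      rw [Real.cos_eq_one_iff_of_lt_of_lt] at h
      · have : 0 < 2 * Real.pi * (w + 1 : ℕ) / (k + 1 : ℕ) := by positivity
        linarith
      · have : 0 < 2 * Real.pi * (w + 1 : ℕ) / (k + 1 : ℕ) := by positivity
        linarith [Real.pi_pos]
      · rw [div_lt_iff₀ (by positivity)]
        have : ((w + 1 : ℕ) : ℝ) < (k + 1 : ℕ) := by exact_mod_cast (by omega)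
        have := Real.pi_pos
        gcongr
    simp only [zero_add]
    intro h
    apply this
    linarith
  rw [hF 0]
  simp only [div_zero, add_zero]
  have htend : Tendsto (fun u : ℝ => F (4 * Real.sinh u ^ 2)) (𝓝[>] 0) (𝓝 (F 0)) := by
    have h0 : ContinuousAt (fun u : ℝ => 4 * Real.sinh u ^ 2) 0 := by
      have := Real.continuous_sinh
      fun_prop
    have h1 : ContinuousAt (fun u : ℝ => F (4 * Real.sinh u ^ 2)) 0 := by
      apply ContinuousAt.comp (g := F) (f := fun u : ℝ => 4 * Real.sinh u ^ 2) _ h0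
      simpa using hcont
    have h2 := h1.tendsto
    simp only [Real.sinh_zero, ne_eq, OfNat.ofNat_ne_zero, not_false_eq_true, zero_pow, mul_zero] at h2
    exact h2.mono_left nhdsWithin_le_nhds
  refine le_of_tendsto htend ?_
  filter_upwards [self_mem_nhdsWithin] with u hu
  have hu : 0 < u := hu
  have hb := (cycSum_bound (k + 1) hn u hu).2
  rw [← hy, hF] at hb
  have hs := Real.sinh_pos_iff.2 hu
  have h3 := nat_mul_sinh_le (k + 1) u hu.le
  have hn0 : (0 : ℝ) < (k + 1 : ℕ) := by positivity
  have : ((k + 1 : ℕ) : ℝ) / (4 * Real.sinh u * Real.sinh ((k + 1 : ℕ) * u)) ≤ 1 / (4 * Real.sinh u ^ 2) := by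
    have h5 : 0 < Real.sinh ((k + 1 : ℕ) * u) := lt_of_lt_of_le (by positivity) h3
    rw [div_le_div_iff₀ (by positivity) (by positivity)]
    nlinarith
  linarith

lemma sinSum_zero (n : ℕ) (a : ℝ) (v : ℕ) :
    ∑ w ∈ Finset.range n, Real.sin (2 * Real.pi * (w * (v : ℝ)) / n) /
      (a + 2 * (1 - Real.cos (2 * Real.pi * w / n))) = 0 := by
  rcases n with _ | k
  · simp
  set f : ℕ → ℝ := fun w => Real.sin (2 * Real.pi * (w * (v : ℝ)) / (k + 1 : ℕ)) /
      (a + 2 * (1 - Real.cos (2 * Real.pi * w / (k + 1 : ℕ)))) with hf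
  rw [Finset.sum_range_succ']
  have h1 := Finset.sum_range_reflect (fun j => f (j + 1)) k
  have h2 : ∑ j ∈ Finset.range k, f (k - 1 - j + 1) = ∑ j ∈ Finset.range k, - f (j + 1) := by
    apply Finset.sum_congr rfl
    intro j hj
    have hj := Finset.mem_range.1 hj
    have e : ((k - 1 - j + 1 : ℕ) : ℝ) = (k + 1 : ℕ) - (j + 1 : ℕ) := by
      rw [eq_sub_iff_add_eq]
      exact_mod_cast (by omega : (k - 1 - j + 1) + (j + 1) = k + 1)
    have hk : ((k + 1 : ℕ) : ℝ) ≠ 0 := by positivity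
    simp only [hf]
    rw [e]
    have e1 : 2 * Real.pi * (((k + 1 : ℕ) - (j + 1 : ℕ) : ℝ) * v) / (k + 1 : ℕ)
        = (v : ℝ) * (2 * Real.pi) - 2 * Real.pi * ((j + 1 : ℕ) * v) / (k + 1 : ℕ) := by
      field_simp
    have e2 : 2 * Real.pi * ((k + 1 : ℕ) - (j + 1 : ℕ) : ℝ) / (k + 1 : ℕ)
        = 2 * Real.pi - 2 * Real.pi * (j + 1 : ℕ) / (k + 1 : ℕ) := by
      field_simp
    rw [e1, e2, Real.cos_two_pi_sub, Real.sin_nat_mul_two_pi_sub, neg_div]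
  rw [h2, Finset.sum_neg_distrib] at h1
  have h3 : ∑ j ∈ Finset.range k, f (j + 1) = 0 := by linarith
  rw [h3]
  simp

lemma sin_low (n m : ℕ) (hn : 0 < n) (hm : 2 * m ≤ n) (hx : Real.sin (Real.pi * m / n) ≤ 1 / 6) :
    3 * m / (n : ℝ) ≤ Real.sin (Real.pi * m / n) := by
  rcases Nat.eq_zero_or_pos m with rfl | hmp
  · simp
  have hn0 : (0 : ℝ) < n := by positivity
  have hm0 : (0 : ℝ) < m := by positivity
  have hp := Real.pi_pos
  have hp1 := Real.pi_gt_d2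
  have hp2 := Real.pi_lt_d2
  set t := Real.pi * m / n with ht
  have ht0 : 0 < t := by positivity
  have ht2 : t ≤ Real.pi / 2 := by
    rw [ht, div_le_iff₀ hn0]
    have : (2 * m : ℝ) ≤ n := by exact_mod_cast hm
    nlinarith
  have h1 := Real.mul_le_sin ht0.le ht2
  have h2 : t ≤ 0.27 := by
    have : 2 / Real.pi * t ≤ 1 / 6 := h1.trans hx
    rw [div_mul_eq_mul_div, div_le_iff₀ hp] at this
    linarith
  have h3 := Real.sin_gt_sub_cube ht0
  have h4 : t * 0.98 ≤ t - t ^ 3 / 6 := by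
    nlinarith [mul_pos ht0 ht0, mul_nonneg ht0.le (mul_nonneg ht0.le (sub_nonneg.2 h2))]
  have h5 : 3 * m / (n : ℝ) ≤ t * 0.98 := by
    rw [ht, div_mul_eq_mul_div]
    apply div_le_div_of_nonneg_right _ hn0.le
    nlinarith
  linarith

lemma exp_neg_pow (m : ℕ) : Real.exp (-(9 / 5 * m)) ≤ (1 / 6 : ℝ) ^ m := by
  have h : Real.exp (-(9 / 5)) ≤ 1 / 6 := by
    rw [Real.exp_neg, one_div]
    apply inv_anti₀ (by norm_num)
    have h1 : (6 : ℝ) ^ 5 ≤ Real.exp (9 / 5) ^ 5 := by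
      rw [← Real.exp_nat_mul]
      have : ((5 : ℕ) : ℝ) * (9 / 5) = (9 : ℕ) * 1 := by norm_num
      rw [this, Real.exp_nat_mul]
      calc (6 : ℝ) ^ 5 ≤ 2.71 ^ 9 := by norm_num
        _ ≤ _ := by
          have := Real.exp_one_gt_d9
          gcongr
          linarith
    exact le_of_pow_le_pow_left₀ (by norm_num) (Real.exp_pos _).le h1
  calc Real.exp (-(9 / 5 * m)) = Real.exp (-(9 / 5)) ^ m := by
        rw [← Real.exp_nat_mul]; congr 1; ring
    _ ≤ _ := by
      have := Real.exp_pos (-(9 / 5))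
      gcongr

lemma one_sub_cos_eq (n v m : ℕ) (hn : 0 < n) (hv : v < n) (hm : m = min v (n - v)) :
    1 - Real.cos (2 * Real.pi * v / n) = 2 * Real.sin (Real.pi * m / n) ^ 2 := by
  have h : Real.sin (Real.pi * v / n) = Real.sin (Real.pi * m / n) := by
    rcases le_total v (n - v) with h | h
    · rw [hm, min_eq_left h]
    · rw [hm, min_eq_right h, Nat.cast_sub hv.le]
      have : Real.pi * ((n : ℝ) - v) / n = Real.pi - Real.pi * v / n := by
        have : (n : ℝ) ≠ 0 := by positivity
        field_simp
      rw [this, Real.sin_pi_sub]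
  rw [← h, Real.sin_sq_eq_half_sub]
  rw [show 2 * (Real.pi * v / n) = 2 * Real.pi * v / n by ring]
  ring

lemma mode_bound (n v0 v1 : ℕ) (hn : 18 ≤ n) (h0 : v0 < n) (h1 : v1 < n) (hv : v0 ≠ 0 ∨ v1 ≠ 0)
    (a : ℝ) (ha : a = 2 * ((1 - Real.cos (2 * Real.pi * v0 / n)) + (1 - Real.cos (2 * Real.pi * v1 / n)))) :
    |cycSum n a ((n / 2 : ℕ))| / (n : ℝ) ^ 2 ≤
      6 / 35 * ((1 / 6) ^ (min v0 (n - v0)) * (1 / 6) ^ (min v1 (n - v1)) + (6 / 7) ^ n) := by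
  have hn0 : (0 : ℝ) < n := by positivity
  have hn18 : (18 : ℝ) ≤ n := by exact_mod_cast hn
  rw [one_sub_cos_eq n v0 _ (by omega) h0 rfl, one_sub_cos_eq n v1 _ (by omega) h1 rfl] at ha
  have hm0 : 2 * min v0 (n - v0) ≤ n := by omega
  have hm1 : 2 * min v1 (n - v1) ≤ n := by omega
  have hm : 1 ≤ min v0 (n - v0) + min v1 (n - v1) := by omega
  generalize min v0 (n - v0) = m0 at *
  generalize min v1 (n - v1) = m1 at *
  have l0 := sin_low n m0 (by omega) hm0
  have l1 := sin_low n m1 (by omega) hm1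
  have snn : ∀ m : ℕ, 2 * m ≤ n → 0 ≤ Real.sin (Real.pi * m / n) := by
    intro m hm
    apply Real.sin_nonneg_of_nonneg_of_le_pi
    · have := Real.pi_pos; positivity
    · rw [div_le_iff₀ hn0]
      have : (m : ℝ) ≤ n := by exact_mod_cast (by omega)
      have := Real.pi_pos
      gcongr
  have p0 := snn m0 hm0
  have p1 := snn m1 hm1
  set x0 := Real.sin (Real.pi * m0 / n)
  set x1 := Real.sin (Real.pi * m1 / n)
  set s := √(x0 ^ 2 + x1 ^ 2) with hs
  have hs0 : 0 ≤ s := Real.sqrt_nonneg _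
  have hs2 : s ^ 2 = x0 ^ 2 + x1 ^ 2 := Real.sq_sqrt (by positivity)
  have a4 : a = 4 * s ^ 2 := by rw [ha, hs2]; ring
  have hx0 : x0 ≤ s := by nlinarith
  have hx1 : x1 ≤ s := by nlinarith
  have hM : (1 : ℝ) ≤ m0 + m1 := by exact_mod_cast hm
  -- small s gives ns ≥ 2.12 (m0 + m1)
  have hsmall : s ≤ 1 / 6 → 3 ≤ n * s ∧ 2.12 * (m0 + m1 : ℝ) ≤ n * s := by
    intro h6
    have k0 := l0 (hx0.trans h6)
    have k1 := l1 (hx1.trans h6)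
    rw [div_le_iff₀ hn0] at k0 k1
    have c0 : (0 : ℝ) ≤ m0 := by positivity
    have c1 : (0 : ℝ) ≤ m1 := by positivity
    have e : (n * s) ^ 2 = (x0 * n) ^ 2 + (x1 * n) ^ 2 := by rw [mul_pow, hs2]; ring
    have f0 : (3 * (m0 : ℝ)) ^ 2 ≤ (x0 * n) ^ 2 := by gcongr
    have f1 : (3 * (m1 : ℝ)) ^ 2 ≤ (x1 * n) ^ 2 := by gcongr
    have hns : 0 ≤ n * s := by positivity
    constructor
    · rcases Nat.eq_zero_or_pos m0 with h | h
      · have : (1 : ℝ) ≤ m1 := by exact_mod_cast (by omega)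
        nlinarith
      · have : (1 : ℝ) ≤ m0 := by exact_mod_cast h
        nlinarith
    · apply le_of_sq_le_sq _ hns
      nlinarith [sq_nonneg ((m0 : ℝ) - m1)]
  have hns3 : 3 ≤ n * s := by
    rcases le_or_gt s (1 / 6) with h | h
    · exact (hsmall h).1
    · nlinarith
  have hspos : 0 < s := by
    rcases hs0.eq_or_lt with h | h
    · rw [← h] at hns3; norm_num at hns3
    · exact h
  set u := Real.arsinh s with hu
  have hsu : Real.sinh u = s := Real.sinh_arsinh s
  have hupos : 0 < u := Real.arsinh_pos_iff.2 hspos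
  have heu : 1 + s ≤ Real.exp u := by
    rw [hu, Real.exp_arsinh]
    have : 1 ≤ √(1 + s ^ 2) := Real.one_le_sqrt.2 (by nlinarith)
    linarith
  have hE : Real.exp (-(n * u)) ≤ (1 / 6) ^ m0 * (1 / 6) ^ m1 + (6 / 7) ^ n := by
    rcases le_or_gt s (1 / 6) with h | h
    · have k := (hsmall h).2
      have h2 : 1 - (1 + s)⁻¹ ≤ u := by
        have := Real.one_sub_inv_le_log_of_pos (show 0 < 1 + s by linarith)
        refine this.trans ?_
        rw [Real.log_le_iff_le_exp (by linarith)]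
        exact heu
      have h3 : 6 / 7 * s ≤ 1 - (1 + s)⁻¹ := by
        have : 1 - (1 + s)⁻¹ = s / (1 + s) := by
          have : 1 + s ≠ 0 := by linarith
          field_simp; ring
        rw [this, le_div_iff₀ (by linarith)]
        nlinarith
      have h4 : 9 / 5 * ((m0 + m1 : ℕ) : ℝ) ≤ n * u := by
        push_cast
        have : n * (6 / 7 * s) ≤ n * u := by
          have := h3.trans h2
          gcongr
        linarith
      calc Real.exp (-(n * u)) ≤ Real.exp (-(9 / 5 * ((m0 + m1 : ℕ) : ℝ))) := by
            apply Real.exp_le_exp.2; linarith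
        _ ≤ (1 / 6) ^ (m0 + m1) := exp_neg_pow _
        _ ≤ _ := by
          rw [pow_add]
          have : (0 : ℝ) ≤ (6 / 7) ^ n := by positivity
          linarith
    · have h2 : Real.exp (-u) ≤ 6 / 7 := by
        rw [Real.exp_neg, show (6 / 7 : ℝ) = (7 / 6)⁻¹ by norm_num]
        apply inv_anti₀ (by norm_num)
        linarith
      calc Real.exp (-(n * u)) = Real.exp (-u) ^ n := by
            rw [← Real.exp_nat_mul]; congr 1; ring
        _ ≤ (6 / 7) ^ n := by
          have := Real.exp_pos (-u)
          gcongr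
        _ ≤ _ := by
          have : (0 : ℝ) ≤ (1 / 6) ^ m0 * (1 / 6) ^ m1 := by positivity
          linarith
  obtain ⟨b1, b2⟩ := cycSum_bound n (by omega) u hupos
  rw [hsu, ← a4] at b1 b2
  rw [abs_of_pos b1]
  have hsh : 3 ≤ Real.sinh (n * u) := by
    have := nat_mul_sinh_le n u hupos.le
    rw [hsu] at this
    linarith
  have hexp : 35 / 72 * Real.exp (n * u) ≤ Real.sinh (n * u) := by
    have e := Real.sinh_eq (n * u)
    have hp := Real.exp_pos (n * u)
    have hq := Real.exp_pos (-(n * u))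
    have hpq : Real.exp (n * u) * Real.exp (-(n * u)) = 1 := by rw [← Real.exp_add]; simp
    have : 6 ≤ Real.exp (n * u) := by linarith
    have : Real.exp (-(n * u)) ≤ 1 / 6 := by nlinarith
    linarith
  calc cycSum n a ((n / 2 : ℕ)) / (n : ℝ) ^ 2 ≤ n / (4 * s * Real.sinh (n * u)) / (n : ℝ) ^ 2 := by gcongr
    _ = 1 / (4 * (n * s) * Real.sinh (n * u)) := by
      have : Real.sinh (n * u) ≠ 0 := by linarith
      field_simp
    _ ≤ 1 / (4 * 3 * (35 / 72 * Real.exp (n * u))) := by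
      gcongr
    _ = 6 / 35 * Real.exp (-(n * u)) := by
      rw [Real.exp_neg]
      have := (Real.exp_pos (n * u)).ne'
      field_simp
      norm_num
    _ ≤ _ := by gcongr

lemma geom_half (k : ℕ) : ∑ j ∈ Finset.range k, (1 / 6 : ℝ) ^ (j + 1) ≤ 1 / 5 := by
  have : ∑ j ∈ Finset.range k, (1 / 6 : ℝ) ^ (j + 1) = 1 / 5 - 1 / 5 * (1 / 6) ^ k := by
    induction k with
    | zero => simp
    | succ k ih => rw [Finset.sum_range_succ, ih, pow_succ]; ring
  rw [this]
  have : (0 : ℝ) ≤ (1 / 6) ^ k := by positivity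
  linarith

lemma sum_min (n : ℕ) : ∑ w : Fin n, (1 / 6 : ℝ) ^ (min (w : ℕ) (n - w)) ≤ 7 / 5 := by
  rw [Fin.sum_univ_eq_sum_range (fun w : ℕ => (1 / 6 : ℝ) ^ (min w (n - w)))]
  rcases n with _ | k
  · simp; norm_num
  rw [Finset.sum_range_succ']
  have h1 := geom_half k
  have h2 := Finset.sum_range_reflect (fun j => (1 / 6 : ℝ) ^ (j + 1)) k
  have h3 : ∑ j ∈ Finset.range k, (1 / 6 : ℝ) ^ (min (j + 1) (k + 1 - (j + 1))) ≤
      ∑ j ∈ Finset.range k, ((1 / 6 : ℝ) ^ (j + 1) + (1 / 6 : ℝ) ^ (k - 1 - j + 1)) := by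
    apply Finset.sum_le_sum
    intro j hj
    have hj := Finset.mem_range.1 hj
    have e : k + 1 - (j + 1) = k - 1 - j + 1 := by omega
    rw [e]
    have q1 : (0 : ℝ) ≤ (1 / 6) ^ (j + 1) := by positivity
    have q2 : (0 : ℝ) ≤ (1 / 6) ^ (k - 1 - j + 1) := by positivity
    rcases le_total (j + 1) (k - 1 - j + 1) with h | h
    · rw [min_eq_left h]; linarith
    · rw [min_eq_right h]; linarith
  rw [Finset.sum_add_distrib, h2] at h3
  simp only [zero_le, inf_of_le_left, pow_zero]
  linarith

lemma sum_pairs (n : ℕ) (hn : 18 ≤ n) (r : ℝ) (hr : 0 ≤ r) (g : (Fin 2 → Fin n) → ℝ)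
    (hg0 : g (fun _ => ⟨0, by omega⟩) ≤ 0)
    (hg : ∀ v : Fin 2 → Fin n, ((v 0 : ℕ) ≠ 0 ∨ (v 1 : ℕ) ≠ 0) → g v ≤
      6 / 35 * ((1 / 6) ^ (min (v 0 : ℕ) (n - v 0)) * (1 / 6) ^ (min (v 1 : ℕ) (n - v 1)) + r)) :
    ∑ v, g v ≤ 6 / 35 * (24 / 25 + n ^ 2 * r) := by
  set z : Fin 2 → Fin n := fun _ => ⟨0, by omega⟩
  have h1 : ∀ v : Fin 2 → Fin n, g v ≤
      6 / 35 * ((∏ i, (1 / 6 : ℝ) ^ (min (v i : ℕ) (n - v i))) + r - if v = z then 1 else 0) := by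
    intro v
    by_cases h : v = z
    · subst h
      simp [z] at hg0 ⊢
      linarith
    · rw [if_neg h, Fin.prod_univ_two, sub_zero]
      apply hg
      by_contra hc
      push Not at hc
      apply h
      funext i
      apply Fin.ext
      fin_cases i
      · exact hc.1
      · exact hc.2
  refine (Finset.sum_le_sum (fun v _ => h1 v)).trans ?_
  rw [← Finset.mul_sum, Finset.sum_sub_distrib, Finset.sum_add_distrib]
  rw [← Fintype.prod_sum (fun (_ : Fin 2) (w : Fin n) => (1 / 6 : ℝ) ^ (min (w : ℕ) (n - w)))]
  have h2 := sum_min n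
  have h3 : 0 ≤ ∑ w : Fin n, (1 / 6 : ℝ) ^ (min (w : ℕ) (n - w)) := by positivity
  rw [Fin.prod_univ_two]
  simp only [Finset.sum_const, Finset.card_univ, Fintype.card_pi, Fintype.card_fin, Finset.prod_const, Finset.sum_ite_eq', Finset.mem_univ, if_true, nsmul_eq_mul]
  push_cast
  nlinarith

lemma green_eq (n : ℕ) (hn : 18 ≤ n) (i : Fin 3) (z : Fin 3 → ℕ) (hz : z i = n / 2 ∨ z i = n - n / 2) :
    ∑ w : Fin 3 → Fin n,
      Real.cos (2 * Real.pi * (∑ i, ((w i : ℕ) : ℝ) * (z i : ℝ)) / n) / eta 3 n w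
    = ∑ v : Fin 2 → Fin n, Real.cos (2 * Real.pi * (∑ j, ((v j : ℕ) : ℝ) * (z (i.succAbove j) : ℝ)) / n) *
      cycSum n (2 * ∑ j, (1 - Real.cos (2 * Real.pi * ((v j : ℕ) : ℝ) / n))) ((n / 2 : ℕ)) := by
  rw [← (Fin.insertNthEquiv (fun _ => Fin n) i).sum_comp, Fintype.sum_prod_type_right]
  apply Finset.sum_congr rfl
  intro v _
  set a := 2 * ∑ j, (1 - Real.cos (2 * Real.pi * ((v j : ℕ) : ℝ) / n)) with ha
  set b := 2 * Real.pi * (∑ j, ((v j : ℕ) : ℝ) * (z (i.succAbove j) : ℝ)) / n with hb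
  have hc : cycSum n a ((n / 2 : ℕ)) = cycSum n a (z i) := by
    rcases hz with h | h
    · rw [h]
    · rw [h, Nat.cast_sub (Nat.div_le_self _ _), cycSum_symm n (by omega)]
  rw [hc]
  have hs := sinSum_zero n a (z i)
  have : ∀ w : Fin n, Real.cos (2 * Real.pi * (∑ k, (((Fin.insertNthEquiv (fun _ => Fin n) i) (w, v) k : ℕ) : ℝ) * (z k : ℝ)) / n) /
      eta 3 n ((Fin.insertNthEquiv (fun _ => Fin n) i) (w, v))
      = Real.cos b * (Real.cos (2 * Real.pi * ((w : ℕ) * (z i : ℝ)) / n) / (a + 2 * (1 - Real.cos (2 * Real.pi * (w : ℕ) / n))))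
       - Real.sin b * (Real.sin (2 * Real.pi * ((w : ℕ) * (z i : ℝ)) / n) / (a + 2 * (1 - Real.cos (2 * Real.pi * (w : ℕ) / n)))) := by
    intro w
    unfold eta
    rw [Fin.sum_univ_succAbove _ i, Fin.sum_univ_succAbove _ i]
    simp only [Fin.insertNthEquiv_apply, Fin.insertNth_apply_same, Fin.insertNth_apply_succAbove]
    rw [mul_add 2, ← ha, add_comm _ a, mul_add (2 * Real.pi), add_div (2 * Real.pi * _), ← hb, Real.cos_add]
    ring
  rw [Finset.sum_congr rfl (fun w _ => this w), Finset.sum_sub_distrib, ← Finset.mul_sum, ← Finset.mul_sum]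
  rw [Fin.sum_univ_eq_sum_range (fun w : ℕ => Real.cos (2 * Real.pi * ((w : ℕ) * (z i : ℝ)) / n) / (a + 2 * (1 - Real.cos (2 * Real.pi * (w : ℕ) / n)))),
    Fin.sum_univ_eq_sum_range (fun w : ℕ => Real.sin (2 * Real.pi * ((w : ℕ) * (z i : ℝ)) / n) / (a + 2 * (1 - Real.cos (2 * Real.pi * (w : ℕ) / n)))), hs]
  simp [cycSum]

lemma val_boundary (n : ℕ) (hn : 18 ≤ n) (y : ℤ) (hy : y.natAbs = n / 2) :
    ((0 - (y : ZMod n)).val = n / 2) ∨ ((0 - (y : ZMod n)).val = n - n / 2) := by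
  rw [zero_sub]
  rcases Int.natAbs_eq y with h | h
  · right
    have : -(y : ZMod n) = ((n - n / 2 : ℕ) : ZMod n) := by
      rw [h, hy, Nat.cast_sub (Nat.div_le_self _ _)]
      generalize n / 2 = k
      simp
    rw [this, ZMod.val_natCast_of_lt (by omega)]
  · left
    have : -(y : ZMod n) = ((n / 2 : ℕ) : ZMod n) := by
      rw [h, hy]
      generalize n / 2 = k
      simp
    rw [this, ZMod.val_natCast_of_lt (by omega)]

lemma const_bound : (0.18 : ℝ) < 3 ^ ((2 : ℝ) / 3) / (2 * (4 * Real.pi) ^ ((2 : ℝ) / 3)) := by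
  have hp := Real.pi_pos
  have hp2 := Real.pi_lt_d2
  have h1 : (0.216 : ℝ) < 3 / (4 * Real.pi) := by
    rw [lt_div_iff₀ (by positivity)]; linarith
  have h2 := Real.rpow_lt_rpow (by norm_num) h1 (show (0 : ℝ) < 2 / 3 by norm_num)
  have h3 : (0.216 : ℝ) ^ ((2 : ℝ) / 3) = 0.36 := by
    rw [show (0.216 : ℝ) = 0.6 ^ (3 : ℝ) by norm_num, ← Real.rpow_mul (by norm_num)]
    norm_num
  rw [h3, Real.div_rpow (by norm_num) (by positivity)] at h2
  have : (3 : ℝ) ^ ((2 : ℝ) / 3) / (2 * (4 * Real.pi) ^ ((2 : ℝ) / 3)) =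
    3 ^ ((2 : ℝ) / 3) / (4 * Real.pi) ^ ((2 : ℝ) / 3) / 2 := by
    rw [div_div, mul_comm 2]
  rw [this]
  linarith

/-- Boundary estimate for the zero-average Green's function in dimension
`3`: there is a constant `c_* < 3^{2/3}/(2 (4π)^{2/3})` such that for all large `n` and every
`y ∈ ℤ³` on the boundary of the cube `[−⌊n/2⌋, ⌊n/2⌋]³`, one has `n · G_n^0(0, ȳ) ≤ c_*`. -/
theorem zero_average_green_boundary_bound_3d :
    ∃ cstar : ℝ,
      cstar < 3 ^ ((2 : ℝ) / 3) / (2 * (4 * Real.pi) ^ ((2 : ℝ) / 3)) ∧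
      ∃ n0 : ℕ, ∀ n : ℕ, n0 ≤ n →
        ∀ y : Fin 3 → ℤ,
          (∀ i, (y i).natAbs ≤ n / 2) → (∃ i, (y i).natAbs = n / 2) →
          (n : ℝ) * torusGreen0 3 n (fun _ => 0) (fun i => (y i : ZMod n)) ≤ cstar := by
  refine ⟨0.18, const_bound, ?_⟩
  have ht := tendsto_pow_const_mul_const_pow_of_lt_one 2 (show (0 : ℝ) ≤ 6 / 7 by norm_num) (by norm_num)
  obtain ⟨N, hN⟩ := eventually_atTop.1 (ht.eventually (gt_mem_nhds (show (0 : ℝ) < 0.05 by norm_num)))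
  refine ⟨max N 18, ?_⟩
  intro n hn y _ hy2
  obtain ⟨i, hi⟩ := hy2
  have hn18 : 18 ≤ n := le_trans (le_max_right _ _) hn
  have hr := hN n (le_trans (le_max_left _ _) hn)
  have hn0 : (0 : ℝ) < n := by positivity
  unfold torusGreen0
  rw [Finset.sum_filter_of_ne]
  swap
  · intro w _ hw
    by_contra hc
    push Not at hc
    apply hw
    have : eta 3 n w = 0 := by
      unfold eta
      simp [hc]
    rw [this, div_zero]
  rw [green_eq n hn18 i (fun k => (0 - (y k : ZMod n)).val) (val_boundary n hn18 (y i) hi)]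
  rw [← mul_assoc, show (n : ℝ) * (1 / (n : ℝ) ^ 3) = 1 / (n : ℝ) ^ 2 by field_simp, Finset.mul_sum]
  refine (sum_pairs n hn18 ((6 / 7) ^ n) (by positivity) _ ?_ ?_).trans ?_
  · simp only [Nat.cast_zero, zero_mul, mul_zero, zero_div, Finset.sum_const_zero, Real.cos_zero, sub_self, one_mul]
    have := cycSum_zero n (by omega)
    exact mul_nonpos_of_nonneg_of_nonpos (by positivity) this
  · intro v hv
    rw [Fin.sum_univ_two (fun j => 1 - Real.cos (2 * Real.pi * ((v j : ℕ) : ℝ) / n))]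
    refine le_trans ?_ (mode_bound n (v 0) (v 1) hn18 (v 0).2 (v 1).2 hv _ rfl)
    rw [one_div, inv_mul_eq_div]
    gcongr
    refine (le_abs_self _).trans ?_
    rw [abs_mul]
    exact mul_le_of_le_one_left (abs_nonneg _) (Real.abs_cos_le_one _)
  · linarith

end
end

section
/- Let d ≥ 1. There exist constants 0 < c ≤ C, depending only on d, such that for every n ≥ 3 and every 2 ≤ k ≤ n^d, the k-th smallest element (counted with multiplicity) of the multiset {η_w : w ∈ {0,…,n−1}^d} lies in the interval [c·k^{2/d}/n², C·k^{2/d}/n²]. -/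
open Filter Topology
open scoped Classical

noncomputable section

lemma aux_count (d n : ℕ) (ηs : ℕ → ℝ)
    (h : Multiset.map (eta d n) (Finset.univ : Finset (Fin d → Fin n)).val
          = ↑(List.ofFn fun j : Fin (n ^ d) => ηs (j : ℕ))) (x : ℝ) :
    (Finset.univ.filter fun w : Fin d → Fin n => eta d n w ≤ x).card
      = (Finset.univ.filter fun j : Fin (n ^ d) => ηs (j : ℕ) ≤ x).card := by
  rw [← Fin.univ_val_map] at h
  have h2 := congrArg (Multiset.countP (fun y => y ≤ x)) h
  rw [Multiset.countP_map, Multiset.countP_map] at h2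
  exact h2

lemma aux_lower (n a : ℕ) (hn : 3 ≤ n) (ha : a < n) (x : ℝ)
    (hx : 2 * (1 - Real.cos (2 * Real.pi * (a : ℝ) / n)) ≤ x) :
    a ≤ ⌊(n : ℝ) * √x / 4⌋₊ ∨ n - a ≤ ⌊(n : ℝ) * √x / 4⌋₊ := by
  have hn0 : (0 : ℝ) < n := by positivity
  have hp := Real.pi_pos
  have key : ∀ b : ℕ, 2 * b ≤ n → 2 * (1 - Real.cos (2 * Real.pi * (b : ℝ) / n)) ≤ x →
      b ≤ ⌊(n : ℝ) * √x / 4⌋₊ := by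
    intro b hb hbx
    have hb' : 2 * (b : ℝ) ≤ n := by exact_mod_cast hb
    have h0 : 0 ≤ 2 * Real.pi * (b : ℝ) / n := by positivity
    have h1 : |2 * Real.pi * (b : ℝ) / n| ≤ Real.pi := by
      rw [abs_of_nonneg h0, div_le_iff₀ hn0]
      nlinarith
    have h2 := Real.cos_le_one_sub_mul_cos_sq h1
    have h3 : 2 / Real.pi ^ 2 * (2 * Real.pi * (b : ℝ) / n) ^ 2 = 8 * ((b : ℝ) / n) ^ 2 := by
      field_simp
      ring
    rw [h3] at h2
    have h4 : (4 * ((b : ℝ) / n)) ^ 2 ≤ x := by nlinarith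
    have h5 := Real.le_sqrt_of_sq_le h4
    apply Nat.le_floor
    have h6 : (b : ℝ) = n * (4 * ((b : ℝ) / n)) / 4 := by
      field_simp
    rw [h6]
    gcongr
  rcases le_total (2 * a) n with h | h
  · exact Or.inl (key a h hx)
  · right
    apply key (n - a) (by omega)
    have : 2 * Real.pi * ((n - a : ℕ) : ℝ) / n = 2 * Real.pi - 2 * Real.pi * (a : ℝ) / n := by
      rw [Nat.cast_sub ha.le]
      field_simp
    rw [this, Real.cos_two_pi_sub]
    exact hx

lemma aux_card (n M : ℕ) :
    (Finset.univ.filter fun a : Fin n => (a : ℕ) ≤ M ∨ n - (a : ℕ) ≤ M).card ≤ 2 * M + 1 := by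
  rw [← Finset.card_range (2 * M + 1)]
  apply Finset.card_le_card_of_injOn
    (fun a : Fin n => if (a : ℕ) ≤ M then (a : ℕ) else M + (n - (a : ℕ)))
  · intro a ha
    simp at ha
    simp only [Finset.coe_range, Set.mem_Iio]
    split_ifs <;> omega
  · intro a ha b hb hab
    have h1 := a.2
    have h2 := b.2
    apply Fin.ext
    simp only at hab
    split_ifs at hab <;> omega

lemma aux_term_nonneg (d n : ℕ) (w : Fin d → Fin n) (i : Fin d) :
    0 ≤ 1 - Real.cos (2 * Real.pi * ((w i : ℕ) : ℝ) / n) :=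
  sub_nonneg.2 (Real.cos_le_one _)

lemma aux_card_lower (d n : ℕ) (hn : 3 ≤ n) (x : ℝ) :
    (Finset.univ.filter fun w : Fin d → Fin n => eta d n w ≤ x).card
      ≤ (2 * ⌊(n : ℝ) * √x / 4⌋₊ + 1) ^ d := by
  set M := ⌊(n : ℝ) * √x / 4⌋₊ with hM
  have hsub : (Finset.univ.filter fun w : Fin d → Fin n => eta d n w ≤ x) ⊆
      Fintype.piFinset (fun _ : Fin d =>
        Finset.univ.filter fun a : Fin n => (a : ℕ) ≤ M ∨ n - (a : ℕ) ≤ M) := by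
    intro w hw
    simp only [Finset.mem_filter, Finset.mem_univ, true_and] at hw
    simp only [Fintype.mem_piFinset, Finset.mem_filter, Finset.mem_univ, true_and]
    intro i
    apply aux_lower n (w i) hn (w i).2 x
    refine le_trans ?_ hw
    unfold eta
    have := Finset.single_le_sum (f := fun i => 1 - Real.cos (2 * Real.pi * ((w i : ℕ) : ℝ) / n))
      (fun j _ => aux_term_nonneg d n w j) (Finset.mem_univ i)
    linarith
  refine (Finset.card_le_card hsub).trans ?_
  rw [Fintype.card_piFinset_const]
  exact Nat.pow_le_pow_left (aux_card n M) d

lemma aux_card_upper (d n r : ℕ) (hn : 3 ≤ n) (hr : r ≤ n) :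
    r ^ d ≤ (Finset.univ.filter fun w : Fin d → Fin n =>
      eta d n w ≤ 4 * Real.pi ^ 2 * d * (r : ℝ) ^ 2 / (n : ℝ) ^ 2).card := by
  have hn0 : (0 : ℝ) < n := by positivity
  have hc : (Finset.univ : Finset (Fin d → Fin r)).card = r ^ d := by simp
  rw [← hc]
  apply Finset.card_le_card_of_injOn (fun w i => Fin.castLE hr (w i))
  · intro w _
    simp only [Finset.coe_filter, Finset.mem_univ, true_and, Set.mem_ofPred_eq]
    unfold eta
    have : ∑ i : Fin d, (1 - Real.cos (2 * Real.pi *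
        (((Fin.castLE hr (w i) : Fin n) : ℕ) : ℝ) / n)) ≤
        ∑ i : Fin d, 2 * Real.pi ^ 2 * (r : ℝ) ^ 2 / (n : ℝ) ^ 2 := by
      apply Finset.sum_le_sum
      intro i _
      have h1 := Real.one_sub_sq_div_two_le_cos
        (x := 2 * Real.pi * (((Fin.castLE hr (w i) : Fin n) : ℕ) : ℝ) / n)
      have h2 : (((Fin.castLE hr (w i) : Fin n) : ℕ) : ℝ) ≤ r := by
        exact_mod_cast (w i).2.le
      have h3 : (2 * Real.pi * (((Fin.castLE hr (w i) : Fin n) : ℕ) : ℝ) / n) ^ 2 ≤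
          (2 * Real.pi * (r : ℝ) / n) ^ 2 := by gcongr
      have h4 : (2 * Real.pi * (r : ℝ) / n) ^ 2 / 2 =
          2 * Real.pi ^ 2 * (r : ℝ) ^ 2 / (n : ℝ) ^ 2 := by
        field_simp
      linarith
    rw [Finset.sum_const, Finset.card_univ, Fintype.card_fin, nsmul_eq_mul] at this
    calc _ ≤ 2 * ((d : ℝ) * (2 * Real.pi ^ 2 * (r : ℝ) ^ 2 / (n : ℝ) ^ 2)) := by linarith
      _ = _ := by ring
  · intro w _ v _ h
    funext i
    exact Fin.castLE_injective hr (congrFun h i)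

/-- Two-sided bound `η_(k) = Θ(k^{2/d}/n²)`: there exist constants
`0 < c ≤ C` depending only on `d` such that for all `n ≥ 3` and `2 ≤ k ≤ n^d`, the `k`-th
smallest element (with multiplicity) of the multiset `{η_w}` lies in
`[c k^{2/d}/n², C k^{2/d}/n²]`. Here the sorted enumeration is encoded by a monotone
function `ηs` whose values (as a multiset) coincide with `{η_w : w}`. -/
theorem torus_laplacian_eigenvalue_asymptotics (d : ℕ) (hd : 1 ≤ d) :
    ∃ c C : ℝ, 0 < c ∧ c ≤ C ∧
      ∀ n : ℕ, 3 ≤ n → ∀ ηs : ℕ → ℝ,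
        (∀ j k : ℕ, j ≤ k → k < n ^ d → ηs j ≤ ηs k) →
        (Multiset.map (eta d n) (Finset.univ : Finset (Fin d → Fin n)).val
          = ↑(List.ofFn fun j : Fin (n ^ d) => ηs (j : ℕ))) →
        ∀ k : ℕ, 2 ≤ k → k ≤ n ^ d →
          c * (k : ℝ) ^ ((2 : ℝ) / d) / (n : ℝ) ^ 2 ≤ ηs (k - 1) ∧
          ηs (k - 1) ≤ C * (k : ℝ) ^ ((2 : ℝ) / d) / (n : ℝ) ^ 2 := by
  have hd0 : (0 : ℝ) < d := by exact_mod_cast hd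
  have hd1 : (1 : ℝ) ≤ d := by exact_mod_cast hd
  refine ⟨1, 16 * Real.pi ^ 2 * d, one_pos, ?_, ?_⟩
  · nlinarith [Real.pi_gt_three, mul_nonneg (sq_nonneg Real.pi) (sub_nonneg.2 hd1)]
  intro n hn ηs hmono hms k hk2 hkn
  have hn0 : (0 : ℝ) < n := by positivity
  have hk1 : (1 : ℝ) ≤ k := by exact_mod_cast (by omega : 1 ≤ k)
  have hk0 : (0 : ℝ) ≤ k := by positivity
  set t : ℝ := (k : ℝ) ^ ((1 : ℝ) / d) with ht
  have ht1 : 1 ≤ t := Real.one_le_rpow hk1 (by positivity)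
  have htd : t ^ d = k := by
    rw [ht, ← Real.rpow_natCast, ← Real.rpow_mul hk0, one_div, inv_mul_cancel₀ hd0.ne',
      Real.rpow_one]
  have ht2 : (k : ℝ) ^ ((2 : ℝ) / d) = t ^ 2 := by
    rw [ht, ← Real.rpow_natCast, ← Real.rpow_mul hk0]
    congr 1
    push_cast
    ring
  rw [ht2]
  constructor
  · set x := ηs (k - 1) with hx
    have hcard : k ≤ (2 * ⌊(n : ℝ) * √x / 4⌋₊ + 1) ^ d := by
      refine le_trans ?_ (aux_card_lower d n hn x)
      rw [aux_count d n ηs hms x]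
      have hc : (Finset.univ : Finset (Fin k)).card = k := by simp
      rw [← hc]
      apply Finset.card_le_card_of_injOn (fun j => Fin.castLE hkn j)
      · intro j _
        simp only [Finset.coe_filter, Finset.mem_univ, true_and, Set.mem_ofPred_eq]
        apply hmono
        · have := j.2
          simp
          omega
        · omega
      · intro a _ b _ h
        exact Fin.castLE_injective hkn h
    set M := ⌊(n : ℝ) * √x / 4⌋₊ with hM
    have hM1 : 1 ≤ M := by
      by_contra h0
      have : M = 0 := by omega
      rw [this] at hcard
      simp at hcard
      omega
    have hx0 : 0 ≤ x := by
      by_contra hneg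
      have : √x = 0 := Real.sqrt_eq_zero_of_nonpos (not_le.1 hneg).le
      rw [hM, this] at hM1
      simp at hM1
    have hMle : (M : ℝ) ≤ n * √x / 4 := Nat.floor_le (by positivity)
    have h3 : t ≤ 3 * M := by
      have h4 : t ^ d ≤ (3 * (M : ℝ)) ^ d := by
        rw [htd]
        have : (k : ℝ) ≤ (2 * (M : ℝ) + 1) ^ d := by exact_mod_cast hcard
        refine this.trans ?_
        have : (1 : ℝ) ≤ M := by exact_mod_cast hM1
        gcongr
        linarith
      exact le_of_pow_le_pow_left₀ (by omega) (by positivity) h4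
    have h5 : t ≤ n * √x := by
      have : 0 ≤ n * √x := by positivity
      linarith
    rw [one_mul, div_le_iff₀ (by positivity)]
    calc t ^ 2 ≤ (n * √x) ^ 2 := by gcongr
      _ = x * n ^ 2 := by rw [mul_pow, Real.sq_sqrt hx0]; ring
  · set r := ⌈t⌉₊ with hr
    have hrn : r ≤ n := by
      rw [hr, Nat.ceil_le]
      refine le_of_pow_le_pow_left₀ (n := d) (by omega) (by positivity) ?_
      rw [htd]
      exact_mod_cast hkn
    have hrk : k ≤ r ^ d := by
      have : (k : ℝ) ≤ (r : ℝ) ^ d := by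
        rw [← htd]
        have := Nat.le_ceil t
        gcongr
      exact_mod_cast this
    have hr2 : (r : ℝ) ≤ 2 * t := by
      have := Nat.ceil_lt_add_one (by linarith : 0 ≤ t)
      linarith
    have hcard := hrk.trans (aux_card_upper d n r hn hrn)
    set B := 4 * Real.pi ^ 2 * d * (r : ℝ) ^ 2 / (n : ℝ) ^ 2 with hB
    have hle : ηs (k - 1) ≤ B := by
      by_contra hlt
      rw [aux_count d n ηs hms B] at hcard
      have : (Finset.univ.filter fun j : Fin (n ^ d) => ηs (j : ℕ) ≤ B).card ≤
          (Finset.range (k - 1)).card := by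
        apply Finset.card_le_card_of_injOn (fun j : Fin (n ^ d) => (j : ℕ))
        · intro j hj
          simp only [Finset.coe_filter, Finset.mem_univ, true_and, Set.mem_ofPred_eq] at hj
          simp only [Finset.coe_range, Set.mem_Iio]
          by_contra hge
          exact hlt ((hmono _ _ (not_lt.1 hge) j.2).trans hj)
        · intro a _ b _ h
          exact Fin.ext h
      rw [Finset.card_range] at this
      omega
    refine hle.trans ?_
    rw [hB]
    calc _ ≤ 4 * Real.pi ^ 2 * d * (2 * t) ^ 2 / (n : ℝ) ^ 2 := by gcongr
      _ = _ := by ring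

end
end

section
/- Let k ∈ ℕ, r ∈ (1,2], and let (X^i)_{i∈ℕ} be i.i.d. centered random vectors in ℝ^k with common probability density function f : ℝ^k → ℝ (with respect to Lebesgue measure). Assume: (1) f ∈ L^r(ℝ^k); (2) every coordinate of X^1 is square-integrable, so the covariance matrix C of X^1 is well-defined with finite entries; (3) C is positive definite. Then sup_{v∈ℝ^k} |n^{k/2}·f^{(n)}(√n·v) − (2π)^{−k/2}·(det C)^{−1/2}·e^{−⟨v, C^{−1}v⟩/2}| → 0 as n → ∞, where f^{(n)} denotes the n-fold convolution of f (the density of Σ_{i=1}^n X^i). -/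
open MeasureTheory Filter Topology Matrix
open scoped Classical

noncomputable section

/-- Convolution of two functions on `ℝ^k`. -/
def convK (k : ℕ) (g h : (Fin k → ℝ) → ℝ) : (Fin k → ℝ) → ℝ :=
  fun x => ∫ y, g (x - y) * h y

/-- The `n`-fold convolution `f^{(n)} = f * ⋯ * f` on `ℝ^k`. -/
def convPow (k : ℕ) (f : (Fin k → ℝ) → ℝ) : ℕ → (Fin k → ℝ) → ℝ
  | 0 => fun _ => 0
  | 1 => f
  | n + 2 => convK k (convPow k f (n + 1)) f

section LCLT
open scoped FourierTransform SchwartzMap ContDiff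

/-- The self-adjointness of the Fourier transform for integrable functions. -/
lemma lclt_flip {V : Type*} [NormedAddCommGroup V] [InnerProductSpace ℝ V] [FiniteDimensional ℝ V]
    [MeasurableSpace V] [BorelSpace V] {f g : V → ℂ} (hf : Integrable f) (hg : Integrable g) :
    ∫ x, 𝓕 f x * g x = ∫ x, f x * 𝓕 g x := by
  have := VectorFourier.integral_fourierIntegral_smul_eq_flip (L := innerₗ V)
    Real.continuous_fourierChar continuous_inner hf hg (μ := volume) (ν := volume)
  rw [flip_innerₗ] at this
  exact this

lemma lclt_flip_inv {V : Type*} [NormedAddCommGroup V] [InnerProductSpace ℝ V]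
    [FiniteDimensional ℝ V]
    [MeasurableSpace V] [BorelSpace V] {f g : V → ℂ} (hf : Integrable f) (hg : Integrable g) :
    ∫ x, 𝓕⁻ f x * g x = ∫ x, f x * 𝓕⁻ g x := by
  have h1 : ∫ x, 𝓕⁻ f x * g x = ∫ x, 𝓕 f x * g (-x) := by
    rw [← integral_neg_eq_self (fun x => 𝓕⁻ f x * g x)]
    simp [Real.fourierInv_eq_fourier_neg]
  rw [h1, lclt_flip hf hg.comp_neg, Real.fourierInv_eq_fourier_comp_neg]

lemma lclt_inversion {V : Type*} [NormedAddCommGroup V] [InnerProductSpace ℝ V]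
    [FiniteDimensional ℝ V]
    [MeasurableSpace V] [BorelSpace V] {f : V → ℂ} (hf : Integrable f) (hF : Integrable (𝓕 f)) :
    ∀ᵐ x, f x = 𝓕⁻ (𝓕 f) x := by
  have hc : Continuous (𝓕⁻ (𝓕 f)) := by
    rw [Real.fourierInv_eq_fourier_comp_neg]
    exact VectorFourier.fourierIntegral_continuous Real.continuous_fourierChar
      (by exact continuous_inner) hF.comp_neg
  refine ae_eq_of_integral_contDiff_smul_eq hf.locallyIntegrable hc.locallyIntegrable ?_
  intro g hg hgs
  have hgs' : HasCompactSupport (fun x => (g x : ℂ)) :=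
    hgs.comp_left (g := fun x : ℝ => (x : ℂ)) (by simp)
  let G : 𝓢(V, ℂ) := hgs'.toSchwartzMap (Complex.ofRealCLM.contDiff.comp hg)
  have hG : ∀ x, G x = (g x : ℂ) := fun x => rfl
  let H : 𝓢(V, ℂ) := 𝓕⁻ G
  have hH : ∀ x, 𝓕 (H : V → ℂ) x = G x := by
    intro x
    rw [← SchwartzMap.fourier_coe]
    simp [H]
  have hH' : ∀ x, H x = 𝓕⁻ (G : V → ℂ) x := by
    intro x
    rw [← SchwartzMap.fourierInv_coe]
  calc ∫ x, g x • f x = ∫ x, f x * 𝓕 (H : V → ℂ) x := by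
        simp_rw [hH, hG, mul_comm (f _), Complex.real_smul]
    _ = ∫ x, 𝓕 f x * H x := (lclt_flip hf H.integrable).symm
    _ = ∫ x, 𝓕 f x * 𝓕⁻ (G : V → ℂ) x := by simp_rw [hH']
    _ = ∫ x, 𝓕⁻ (𝓕 f) x * G x := (lclt_flip_inv hF G.integrable).symm
    _ = ∫ x, g x • 𝓕⁻ (𝓕 f) x := by
        simp_rw [hG, mul_comm _ (Complex.ofReal _), Complex.real_smul]

lemma lclt_cont {V : Type*} [NormedAddCommGroup V] [InnerProductSpace ℝ V]
    [FiniteDimensional ℝ V]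
    [MeasurableSpace V] [BorelSpace V] {f : V → ℂ} (hf : Integrable f) : Continuous (𝓕 f) :=
  VectorFourier.fourierIntegral_continuous Real.continuous_fourierChar
      (by exact continuous_inner) hf

lemma lclt_plancherel {V : Type*} [NormedAddCommGroup V] [InnerProductSpace ℝ V]
    [FiniteDimensional ℝ V]
    [MeasurableSpace V] [BorelSpace V] {f : V → ℂ} (hf : Integrable f) (hf2 : MemLp f 2 volume) :
    eLpNorm (𝓕 f) 2 volume = eLpNorm f 2 volume := by
  let F : Lp (α := V) ℂ 2 volume := hf2.toLp f
  have key : ∀ᵐ x, 𝓕 f x = (𝓕 F : Lp (α := V) ℂ 2 volume) x := by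
    refine ae_eq_of_integral_contDiff_smul_eq (lclt_cont hf).locallyIntegrable
      ((Lp.memLp (𝓕 F)).locallyIntegrable (by norm_num)) ?_
    intro g hg hgs
    have hgs' : HasCompactSupport (fun x => (g x : ℂ)) :=
      hgs.comp_left (g := fun x : ℝ => (x : ℂ)) (by simp)
    let G : 𝓢(V, ℂ) := hgs'.toSchwartzMap (Complex.ofRealCLM.contDiff.comp hg)
    have hG : ∀ x, G x = (g x : ℂ) := fun x => rfl
    have h := MeasureTheory.Lp.fourier_toTemperedDistribution_eq F
    have h2 := congrArg (fun T => T G) h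
    simp only [TemperedDistribution.fourier_apply, Lp.toTemperedDistribution_apply] at h2
    calc ∫ x, g x • 𝓕 f x = ∫ x, 𝓕 f x * G x := by
          simp_rw [hG, mul_comm _ (Complex.ofReal _), Complex.real_smul]
      _ = ∫ x, f x * 𝓕 (G : V → ℂ) x := lclt_flip hf G.integrable
      _ = ∫ x, (𝓕 G) x • F x := by
          apply integral_congr_ae
          filter_upwards [hf2.coeFn_toLp] with x hx
          rw [hx, ← SchwartzMap.fourier_coe, mul_comm, smul_eq_mul]
      _ = ∫ x, G x • (𝓕 F : Lp (α := V) ℂ 2 volume) x := h2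
      _ = _ := by simp_rw [hG]; rfl
  rw [eLpNorm_congr_ae key]
  have := Lp.norm_fourier_eq F
  rw [Lp.norm_def, Lp.norm_def, ENNReal.toReal_eq_toReal_iff' (Lp.eLpNorm_ne_top _)
    (Lp.eLpNorm_ne_top _)] at this
  rw [this, eLpNorm_congr_ae hf2.coeFn_toLp]

lemma lclt_norm_le {V : Type*} [NormedAddCommGroup V] [InnerProductSpace ℝ V]
    [FiniteDimensional ℝ V] [MeasurableSpace V] [BorelSpace V] (f : V → ℂ) (t : V) :
    ‖𝓕 f t‖ ≤ ∫ x, ‖f x‖ :=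
  VectorFourier.norm_fourierIntegral_le_integral_norm _ _ _ _ _

lemma lclt_trunc {V : Type*} [NormedAddCommGroup V] [InnerProductSpace ℝ V]
    [FiniteDimensional ℝ V] [MeasurableSpace V] [BorelSpace V]
    (r : ℝ) (hr1 : 1 < r) (f : V → ℝ)
    (hfmeas : Measurable f) (hfnn : ∀ x, 0 ≤ f x) (hfi : Integrable f)
    (hfprob : ∫ x, f x = 1)
    (hLr : Integrable fun x => |f x| ^ r) (L : ℝ) (hL : 0 < L) :
    ∃ g : V → ℂ, Integrable g ∧ ∫⁻ t, ‖𝓕 g t‖ₑ ^ 2 ≤ ENNReal.ofReal L ∧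
      ∀ t, ‖𝓕 (fun x => (f x : ℂ)) t‖ ≤ ‖𝓕 g t‖ + L ^ (1 - r) * ∫ x, |f x| ^ r := by
  set S : Set V := {x | f x ≤ L}
  have hS : MeasurableSet S := measurableSet_le hfmeas measurable_const
  have hfC : Integrable (fun x => (f x : ℂ)) := hfi.ofReal
  set g : V → ℂ := S.indicator (fun x => (f x : ℂ)) with hg
  set h : V → ℂ := Sᶜ.indicator (fun x => (f x : ℂ)) with hh
  have hgi : Integrable g := hfC.indicator hS
  have hhi : Integrable h := hfC.indicator hS.compl
  have hgle : ∀ x, ‖g x‖ ≤ L := by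
    intro x
    by_cases hx : x ∈ S
    · simp only [hg, Set.indicator_of_mem hx, Complex.norm_real, Real.norm_eq_abs,
        abs_of_nonneg (hfnn x)]
      exact hx
    · simp [hg, Set.indicator_of_notMem hx, hL.le]
  have hgle2 : ∀ x, ‖g x‖ ≤ f x := by
    intro x
    by_cases hx : x ∈ S
    · simp only [hg, Set.indicator_of_mem hx, Complex.norm_real, Real.norm_eq_abs,
        abs_of_nonneg (hfnn x), le_refl]
    · simp [hg, Set.indicator_of_notMem hx, hfnn x]
  have hg2 : MemLp g 2 volume := by
    rw [memLp_two_iff_integrable_sq_norm hgi.1]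
    refine (hfi.const_mul L).mono' (hgi.1.norm.pow 2) (ae_of_all _ fun x => ?_)
    rw [Real.norm_eq_abs, abs_of_nonneg (by positivity), pow_two]
    exact mul_le_mul (hgle x) (hgle2 x) (norm_nonneg _) hL.le
  refine ⟨g, hgi, ?_, ?_⟩
  · have e := lclt_plancherel hgi hg2
    rw [eLpNorm_eq_lintegral_rpow_enorm_toReal (by norm_num) (by norm_num),
      eLpNorm_eq_lintegral_rpow_enorm_toReal (by norm_num) (by norm_num)] at e
    have e2 := congrArg (fun z : ENNReal => z ^ (2:ℝ)) e
    simp only [← ENNReal.rpow_mul] at e2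
    norm_num at e2
    rw [e2]
    calc ∫⁻ x, ‖g x‖ₑ ^ 2 ≤ ∫⁻ x, ENNReal.ofReal L * ENNReal.ofReal (f x) := by
          refine lintegral_mono fun x => ?_
          rw [← ofReal_norm, ← ENNReal.ofReal_pow (norm_nonneg _),
            ← ENNReal.ofReal_mul hL.le]
          refine ENNReal.ofReal_le_ofReal ?_
          rw [pow_two]
          exact mul_le_mul (hgle x) (hgle2 x) (norm_nonneg _) hL.le
      _ = ENNReal.ofReal L := by
          rw [lintegral_const_mul' _ _ ENNReal.ofReal_ne_top,
            ← ofReal_integral_eq_lintegral_ofReal hfi (ae_of_all _ hfnn), hfprob]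
          simp
  · intro t
    have hsum : (fun x => (f x : ℂ)) = g + h := by
      rw [hg, hh, Set.indicator_self_add_compl]
    have h1 : 𝓕 (fun x => (f x : ℂ)) t = 𝓕 g t + 𝓕 h t := by
      rw [hsum]
      have := VectorFourier.fourierIntegral_add Real.continuous_fourierChar
        (L := innerₗ V) (by exact continuous_inner) hgi hhi
      exact congrFun this t
    rw [h1]
    refine (norm_add_le _ _).trans ?_
    gcongr
    refine (lclt_norm_le _ _).trans ?_
    rw [← integral_const_mul]
    refine integral_mono hhi.norm (hLr.const_mul _) fun x => ?_
    by_cases hx : x ∈ S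
    · simp only [hh, Set.indicator_of_notMem (show x ∉ Sᶜ by simpa using hx), norm_zero]
      positivity
    · simp only [hh, Set.indicator_of_mem (show x ∈ Sᶜ from hx), Complex.norm_real,
        Real.norm_eq_abs, abs_of_nonneg (hfnn x)]
      have hx' : L < f x := not_le.1 hx
      have hp : 0 < f x := hL.trans hx'
      calc f x = f x ^ (1 - r) * f x ^ r := by
            rw [← Real.rpow_add hp]; simp
        _ ≤ _ := by
            gcongr ?_ * _
            exact Real.rpow_le_rpow_of_nonpos hL hx'.le (by linarith)

lemma lclt_pow_integrable {V : Type*} [NormedAddCommGroup V] [InnerProductSpace ℝ V]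
    [FiniteDimensional ℝ V] [MeasurableSpace V] [BorelSpace V]
    (r : ℝ) (hr1 : 1 < r) (f : V → ℝ)
    (hfmeas : Measurable f) (hfnn : ∀ x, 0 ≤ f x) (hfi : Integrable f)
    (hfprob : ∫ x, f x = 1)
    (hLr : Integrable fun x => |f x| ^ r) :
    ∃ N : ℕ, 1 ≤ N ∧ Integrable (fun t => (𝓕 (fun x => (f x : ℂ)) t) ^ N) := by
  set φ := 𝓕 (fun x => (f x : ℂ)) with hφ
  set A := ∫ x, |f x| ^ r with hA
  have hA0 : 0 ≤ A := integral_nonneg fun x => by positivity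
  have hφc : Continuous φ := lclt_cont hfi.ofReal
  have hφ1 : ∀ t, ‖φ t‖ ≤ 1 := by
    intro t
    refine (lclt_norm_le _ _).trans ?_
    simp only [Complex.norm_real, Real.norm_eq_abs, abs_of_nonneg (hfnn _), hfprob, le_refl]
  obtain ⟨p, hp⟩ := exists_nat_gt (1 / (r - 1))
  have hr0 : 0 < r - 1 := by linarith
  have hp1 : 1 ≤ p * (r - 1) := by
    rw [div_lt_iff₀ hr0] at hp; exact hp.le
  obtain ⟨B, hB0, hB⟩ : ∃ B : ℝ, 0 < B ∧ B ^ (1 - r) * A ≤ 1 / 4 := by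
    have h1 : Tendsto (fun B : ℝ => B ^ (-(r - 1)) * A) atTop (𝓝 (0 * A)) :=
      (tendsto_rpow_neg_atTop hr0).mul_const A
    rw [zero_mul] at h1
    obtain ⟨B, h2, h3⟩ := ((h1.eventually (ge_mem_nhds (show (0:ℝ) < 1/4 by norm_num))).and
      (eventually_gt_atTop 0)).exists
    exact ⟨B, h3, by simpa using h2⟩
  have hLpos : ∀ j : ℕ, 0 < B * 2 ^ (p * j) := fun j => by positivity
  have hLj : ∀ j : ℕ, (B * 2 ^ (p * j)) ^ (1 - r) * A ≤ (1 / 2) ^ (j + 2) := by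
    intro j
    rw [Real.mul_rpow hB0.le (by positivity)]
    have : ((2:ℝ) ^ (p * j)) ^ (1 - r) ≤ (1 / 2) ^ j := by
      rw [← Real.rpow_natCast, ← Real.rpow_mul (by norm_num), one_div, inv_pow, ← Real.rpow_natCast,
        ← Real.rpow_neg (by norm_num)]
      apply Real.rpow_le_rpow_of_exponent_le (by norm_num)
      push_cast
      have hj : (0:ℝ) ≤ j := by positivity
      nlinarith
    calc B ^ (1 - r) * ((2:ℝ) ^ (p * j)) ^ (1 - r) * A
        = (B ^ (1 - r) * A) * ((2:ℝ) ^ (p * j)) ^ (1 - r) := by ring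
      _ ≤ 1 / 4 * (1 / 2) ^ j := by gcongr
      _ = _ := by rw [pow_add]; norm_num; ring
  choose g hgi hg2 hgle using fun j : ℕ =>
    lclt_trunc r hr1 f hfmeas hfnn hfi hfprob hLr (B * 2 ^ (p * j)) (hLpos j)
  refine ⟨p + 3, by omega, ?_⟩
  refine ⟨(hφc.pow _).aestronglyMeasurable, ?_⟩
  rw [hasFiniteIntegral_iff_enorm]
  set c : ℕ → ℝ := fun j => (1 / 2) ^ (j * (p + 3)) * 4 ^ (j + 2) with hc
  have hc0 : ∀ j, 0 ≤ c j := fun j => by positivity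
  have hpt : ∀ t, ‖φ t ^ (p + 3)‖ₑ ≤ ∑' j, ENNReal.ofReal (c j) * ‖𝓕 (g j) t‖ₑ ^ 2 := by
    intro t
    rcases eq_or_ne (φ t) 0 with h0 | h0
    · simp [h0]
    · obtain ⟨j, hj1, hj2⟩ := exists_nat_pow_near_of_lt_one (norm_pos_iff.2 h0) (hφ1 t)
        (show (0:ℝ) < 1 / 2 by norm_num) (by norm_num)
      refine le_trans ?_ (ENNReal.le_tsum j)
      rw [← ofReal_norm, ← ofReal_norm, ← ENNReal.ofReal_pow (norm_nonneg _),
            ← ENNReal.ofReal_mul (hc0 j)]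
      refine ENNReal.ofReal_le_ofReal ?_
      have h1 := hgle j t
      have h2 := hLj j
      have h3 : (1/2:ℝ) ^ (j + 2) ≤ ‖𝓕 (g j) t‖ := by
        have : (1/2:ℝ) ^ (j + 1) = 2 * (1/2) ^ (j+2) := by ring
        linarith
      have h4 : ((1/2:ℝ) ^ (j + 2)) ^ 2 ≤ ‖𝓕 (g j) t‖ ^ 2 := by gcongr
      have h5 : (4:ℝ) ^ (j + 2) * ((1/2:ℝ) ^ (j + 2)) ^ 2 = 1 := by
        rw [← pow_mul, mul_comm (j+2) 2, pow_mul, ← mul_pow]; norm_num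
      rw [norm_pow]
      calc ‖φ t‖ ^ (p + 3) ≤ ((1/2:ℝ) ^ j) ^ (p + 3) := by gcongr
        _ = (1/2:ℝ) ^ (j * (p + 3)) * (4 ^ (j + 2) * ((1/2:ℝ) ^ (j + 2)) ^ 2) := by
            rw [h5, mul_one, ← pow_mul]
        _ ≤ (1/2:ℝ) ^ (j * (p + 3)) * (4 ^ (j + 2) * ‖𝓕 (g j) t‖ ^ 2) := by gcongr
        _ = _ := by rw [hc]; ring
  calc ∫⁻ t, ‖φ t ^ (p + 3)‖ₑ ≤ ∫⁻ t, ∑' j, ENNReal.ofReal (c j) * ‖𝓕 (g j) t‖ₑ ^ 2 :=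
        lintegral_mono hpt
    _ = ∑' j, ENNReal.ofReal (c j) * ∫⁻ t, ‖𝓕 (g j) t‖ₑ ^ 2 := by
        rw [lintegral_tsum]
        · congr 1; ext j
          rw [lintegral_const_mul' _ _ ENNReal.ofReal_ne_top]
        · intro j
          exact (((lclt_cont (hgi j)).enorm.measurable.pow_const 2).const_mul _).aemeasurable
    _ ≤ ∑' j : ℕ, ENNReal.ofReal (16 * B * (1 / 2) ^ j) := by
        refine ENNReal.tsum_le_tsum fun j => ?_
        refine (mul_le_mul_right (hg2 j) _).trans ?_
        rw [← ENNReal.ofReal_mul (hc0 j)]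
        refine ENNReal.ofReal_le_ofReal (le_of_eq ?_)
        have e1 : ((1:ℝ)/2) ^ (j * (p + 3)) = (1/2) ^ (p * j) * ((1/2) ^ j) ^ 3 := by
          rw [← pow_mul, ← pow_add]; ring_nf
        have e2 : ((1:ℝ)/2) ^ (p * j) * 2 ^ (p * j) = 1 := by rw [← mul_pow]; norm_num
        have e3 : ((1:ℝ)/2) ^ j * 2 ^ j = 1 := by rw [← mul_pow]; norm_num
        have e4 : (4:ℝ) ^ (j + 2) = 16 * (2 ^ j) ^ 2 := by
          rw [pow_add, ← pow_mul, mul_comm j 2, pow_mul]; norm_num; ring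
        simp only [hc]
        rw [e1, e4]
        calc _ = 16 * B * (1/2) ^ j * (((1:ℝ)/2) ^ (p * j) * 2 ^ (p * j)) *
              (((1:ℝ)/2) ^ j * 2 ^ j) ^ 2 := by ring
          _ = _ := by rw [e2, e3]; ring
    _ < ⊤ := by
        rw [← ENNReal.ofReal_tsum_of_nonneg (fun j => by positivity)]
        · exact ENNReal.ofReal_lt_top
        · exact (summable_geometric_of_lt_one (by norm_num) (by norm_num)).mul_left _

open Convolution in
lemma lclt_cp {V : Type*} [NormedAddCommGroup V] [InnerProductSpace ℝ V]
    [FiniteDimensional ℝ V] [MeasurableSpace V] [BorelSpace V]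
    (F : V → ℝ) (hF : Integrable F) (cp : ℕ → V → ℝ) (h1 : cp 1 = F)
    (h2 : ∀ n x, cp (n + 2) x = ∫ y, cp (n + 1) (x - y) * F y) (n : ℕ) :
    Integrable (fun x => (cp (n + 1) x : ℂ)) ∧
      ∀ t, 𝓕 (fun x => (cp (n + 1) x : ℂ)) t = 𝓕 (fun x => (F x : ℂ)) t ^ (n + 1) := by
  induction n with
  | zero => exact ⟨by rw [h1]; exact hF.ofReal, by simp [h1]⟩
  | succ n ih =>
    have e : (fun x => (cp (n + 1 + 1) x : ℂ)) =
        (fun x => (F x : ℂ)) ⋆[ContinuousLinearMap.mul ℂ ℂ] (fun x => (cp (n + 1) x : ℂ)) := by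
      ext x
      rw [h2, ← integral_complex_ofReal]
      simp only [convolution, ContinuousLinearMap.mul_apply', Complex.ofReal_mul]
      congr 1; ext y; ring
    have hFC : Integrable (fun x => (F x : ℂ)) := hF.ofReal
    rw [e]
    refine ⟨hFC.integrable_convolution _ ih.1, fun t => ?_⟩
    rw [Real.fourier_mul_convolution_eq hFC ih.1, ih.2]
    ring

lemma lclt_cp_eq {V : Type*} [NormedAddCommGroup V] [InnerProductSpace ℝ V]
    [FiniteDimensional ℝ V] [MeasurableSpace V] [BorelSpace V]
    (F : V → ℝ) (hF : Integrable F) (cp : ℕ → V → ℝ) (h1 : cp 1 = F)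
    (h2 : ∀ n x, cp (n + 2) x = ∫ y, cp (n + 1) (x - y) * F y) (n : ℕ)
    (hn : Integrable (fun t => 𝓕 (fun x => (F x : ℂ)) t ^ (n + 1))) (x : V) :
    (cp (n + 2) x : ℂ) = 𝓕⁻ (fun t => 𝓕 (fun x => (F x : ℂ)) t ^ (n + 2)) x := by
  obtain ⟨hi, hf⟩ := lclt_cp F hF cp h1 h2 n
  set φ := 𝓕 (fun x => (F x : ℂ)) with hφ
  have hf' : 𝓕 (fun x => (cp (n + 1) x : ℂ)) = fun t => φ t ^ (n + 1) := funext hf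
  have hinv := lclt_inversion hi (by rw [hf']; exact hn)
  rw [hf'] at hinv
  set G : V → ℂ := fun t => Real.fourierChar (inner ℝ t x) • φ t ^ (n + 1) with hG
  have hGi : Integrable G := by
    have := (Real.fourierIntegral_convergent_iff (f := fun t => φ t ^ (n + 1)) (-x)).2 hn
    simpa [hG] using this
  have hGF : ∀ y, 𝓕⁻ (fun t => φ t ^ (n + 1)) (x - y) = 𝓕 G y := by
    intro y
    rw [Real.fourierInv_eq, Real.fourier_eq]
    congr 1; ext t
    simp only [hG]
    rw [inner_sub_right, sub_eq_neg_add, AddChar.map_add_eq_mul, mul_smul]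
  have hq : ∀ᵐ y, (cp (n + 1) (x - y) : ℂ) = 𝓕⁻ (fun t => φ t ^ (n + 1)) (x - y) :=
    (quasiMeasurePreserving_sub_left volume x).ae hinv
  calc (cp (n + 2) x : ℂ) = ∫ y, (cp (n + 1) (x - y) : ℂ) * (F y : ℂ) := by
        rw [h2, ← integral_complex_ofReal]; simp
    _ = ∫ y, 𝓕 G y * (F y : ℂ) := by
        apply integral_congr_ae
        filter_upwards [hq] with y hy
        rw [hy, hGF]
    _ = ∫ t, G t * φ t := lclt_flip hGi hF.ofReal
    _ = _ := by
        rw [Real.fourierInv_eq]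
        congr 1; ext t
        simp only [hG, Circle.smul_def, smul_eq_mul]
        ring

lemma lclt_RL {V : Type*} [NormedAddCommGroup V] [InnerProductSpace ℝ V]
    [FiniteDimensional ℝ V] [MeasurableSpace V] [BorelSpace V]
    (f : V → ℂ) : Tendsto (𝓕 f) (cocompact V) (𝓝 0) :=
  tendsto_integral_exp_inner_smul_cocompact f

lemma lclt_lt_one {V : Type*} [NormedAddCommGroup V] [InnerProductSpace ℝ V]
    [FiniteDimensional ℝ V] [MeasurableSpace V] [BorelSpace V]
    (f : V → ℝ) (hfnn : ∀ x, 0 ≤ f x) (hfi : Integrable f)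
    (hfprob : ∫ x, f x = 1) (t : V) (ht : t ≠ 0) : ‖𝓕 (fun x => (f x : ℂ)) t‖ < 1 := by
  set φ := 𝓕 (fun x => (f x : ℂ)) with hφ
  have hφ1 : ∀ t, ‖φ t‖ ≤ 1 := by
    intro t
    refine (lclt_norm_le _ _).trans ?_
    simp only [Complex.norm_real, Real.norm_eq_abs, abs_of_nonneg (hfnn _), hfprob, le_refl]
  refine lt_of_le_of_ne (hφ1 t) fun h1 => ?_
  set u := φ t with hu
  set e : V → ℂ := fun x => (Real.fourierChar (-inner ℝ x t) : ℂ) with he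
  have hen : ∀ x, ‖e x‖ = 1 := fun x => Circle.norm_coe _
  have hei : Integrable (fun x => e x * (f x : ℂ)) := by
    have := (Real.fourierIntegral_convergent_iff (f := fun x => (f x : ℂ)) t).2 hfi.ofReal
    simpa [Circle.smul_def, smul_eq_mul] using this
  have hue : u = ∫ x, e x * (f x : ℂ) := by
    rw [hu, hφ, Real.fourier_eq]; rfl
  have huu : (starRingEnd ℂ) u * u = 1 := by
    rw [mul_comm, Complex.mul_conj, Complex.normSq_eq_norm_sq, h1]; simp
  have hre : ∀ z : ℂ, ‖z‖ = 1 → z.re ≤ 1 := fun z hz => hz ▸ Complex.re_le_norm z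
  have hnorm : ∀ x, ‖(starRingEnd ℂ) u * e x‖ = 1 := by
    intro x; rw [norm_mul, hen, RCLike.norm_conj, h1, one_mul]
  have hi2 : Integrable (fun x => ((starRingEnd ℂ) u * e x).re * f x) := by
    have := (hei.const_mul ((starRingEnd ℂ) u)).re
    refine this.congr (ae_of_all _ fun x => ?_)
    change ((starRingEnd ℂ) u * (e x * (f x : ℂ))).re = _
    rw [← mul_assoc, Complex.re_mul_ofReal]
  have hint : ∫ x, (1 - ((starRingEnd ℂ) u * e x).re) * f x = 0 := by
    have h3 : ∫ x, ((starRingEnd ℂ) u * e x).re * f x = 1 := by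
      have h4 : ∫ x, (starRingEnd ℂ) u * (e x * (f x : ℂ)) = 1 := by
        rw [integral_const_mul, ← hue, huu]
      have h5 := integral_re (hei.const_mul ((starRingEnd ℂ) u))
      rw [h4] at h5
      rw [← show RCLike.re (1:ℂ) = (1:ℝ) by simp, ← h5]
      refine integral_congr_ae (ae_of_all _ fun x => ?_)
      change _ = ((starRingEnd ℂ) u * (e x * (f x : ℂ))).re
      rw [← mul_assoc, Complex.re_mul_ofReal]
    simp_rw [sub_mul, one_mul]
    rw [integral_sub hfi hi2, hfprob, h3, sub_self]
  have hi3 : Integrable (fun x => (1 - ((starRingEnd ℂ) u * e x).re) * f x) := by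
    simp_rw [sub_mul, one_mul]; exact hfi.sub hi2
  have hae := (integral_eq_zero_iff_of_nonneg (fun x =>
    mul_nonneg (sub_nonneg.2 (hre _ (hnorm x))) (hfnn x)) hi3).1 hint
  have hae2 : ∀ᵐ x, f x = 0 ∨ e x = u := by
    filter_upwards [hae] with x hx
    rcases mul_eq_zero.1 hx with h | h
    · right
      have h6 : ((starRingEnd ℂ) u * e x).re = 1 := by linarith
      have h7 : (starRingEnd ℂ) u * e x = 1 := by
        apply Complex.ext
        · simpa using h6
        · have h8 : ‖(starRingEnd ℂ) u * e x‖ ^ 2 = 1 := by rw [hnorm]; norm_num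
          rw [← Complex.normSq_eq_norm_sq, Complex.normSq_apply, h6] at h8
          have : ((starRingEnd ℂ) u * e x).im * ((starRingEnd ℂ) u * e x).im = 0 := by linarith
          simpa using this
      have h9 : u * ((starRingEnd ℂ) u * e x) = u * 1 := by rw [h7]
      rw [← mul_assoc, mul_comm u, huu] at h9
      simpa using h9
    · exact Or.inl h
  have hm : ∀ m : ℕ, φ ((m : ℝ) • t) = u ^ m := by
    intro m
    rw [hφ, Real.fourier_eq]
    have : ∀ᵐ x, Real.fourierChar (-inner ℝ x ((m:ℝ) • t)) • (f x : ℂ) = u ^ m * (f x : ℂ) := by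
      filter_upwards [hae2] with x hx
      rcases hx with h | h
      · simp [h]
      · rw [← h, Circle.smul_def, smul_eq_mul, inner_smul_right, he, ← Circle.coe_pow,
          ← AddChar.map_nsmul_eq_pow, nsmul_eq_mul, mul_neg]
    rw [integral_congr_ae this, integral_const_mul, integral_complex_ofReal, hfprob]
    simp
  have htend : Tendsto (fun m : ℕ => (m : ℝ) • t) atTop (cocompact V) := by
    rw [← Metric.cobounded_eq_cocompact, ← tendsto_norm_atTop_iff_cobounded]
    simp_rw [norm_smul]
    refine Tendsto.atTop_mul_const (norm_pos_iff.2 ht) ?_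
    simpa using tendsto_natCast_atTop_atTop (R := ℝ)
  have h10 := ((lclt_RL (fun x => (f x : ℂ))).comp htend).norm
  have h11 : (fun m : ℕ => ‖(𝓕 (fun x => (f x : ℂ)) ∘ fun m : ℕ => (m : ℝ) • t) m‖)
      = fun _ => (1:ℝ) := by
    ext m
    simp only [Function.comp]
    rw [← hφ, hm, norm_pow, h1, one_pow]
  rw [h11, norm_zero] at h10
  exact one_ne_zero (tendsto_nhds_unique tendsto_const_nhds h10)

lemma lclt_away {V : Type*} [NormedAddCommGroup V] [InnerProductSpace ℝ V]
    [FiniteDimensional ℝ V] [MeasurableSpace V] [BorelSpace V]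
    (f : V → ℝ) (hfnn : ∀ x, 0 ≤ f x) (hfi : Integrable f)
    (hfprob : ∫ x, f x = 1) (δ : ℝ) (hδ : 0 < δ) :
    ∃ η : ℝ, 0 ≤ η ∧ η < 1 ∧ ∀ t, δ ≤ ‖t‖ → ‖𝓕 (fun x => (f x : ℂ)) t‖ ≤ η := by
  have hRL := (lclt_RL (fun x => (f x : ℂ))).norm
  have hc := lclt_cont (f := fun x => (f x : ℂ)) hfi.ofReal
  have hlt := lclt_lt_one f hfnn hfi hfprob
  set φ := 𝓕 (fun x => (f x : ℂ)) with hφ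
  rw [norm_zero] at hRL
  have h1 := hRL.eventually (ge_mem_nhds (show (0:ℝ) < 1/2 by norm_num))
  obtain ⟨K, hK, hK2⟩ := mem_cocompact.1 h1
  have hS : IsCompact (K ∩ {t | δ ≤ ‖t‖}) :=
    hK.inter_right (isClosed_le continuous_const continuous_norm)
  rcases (K ∩ {t | δ ≤ ‖t‖}).eq_empty_or_nonempty with he | hne
  · refine ⟨1/2, by norm_num, by norm_num, fun t ht => ?_⟩
    refine hK2 fun h => ?_
    have : t ∈ K ∩ {t | δ ≤ ‖t‖} := ⟨h, ht⟩
    rw [he] at this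
    exact this
  · obtain ⟨t0, ht0, hmax⟩ := hS.exists_isMaxOn hne hc.norm.continuousOn
    refine ⟨max (1/2) ‖φ t0‖, by positivity, max_lt (by norm_num) (hlt t0 ?_), fun t ht => ?_⟩
    · exact norm_pos_iff.1 (hδ.trans_le ht0.2)
    · by_cases h : t ∈ K
      · exact le_max_of_le_right (hmax ⟨h, ht⟩)
      · exact le_max_of_le_left (hK2 h)

lemma lclt_exp_bound (y : ℝ) :
    ‖Complex.exp (y * Complex.I) - (1 + y * Complex.I - (y : ℂ) ^ 2 / 2)‖
      ≤ 4 * (y ^ 2 * min 1 |y|) := by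
  rcases le_total |y| 1 with h | h
  · rw [min_eq_right h]
    have h1 := Complex.norm_exp_sub_sum_le_norm_mul_exp (y * Complex.I) 3
    have h2 : ∑ m ∈ Finset.range 3, (y * Complex.I) ^ m / (m.factorial : ℂ)
        = 1 + y * Complex.I - (y : ℂ) ^ 2 / 2 := by
      simp [Finset.sum_range_succ, Nat.factorial, mul_pow]
      ring
    rw [h2] at h1
    refine h1.trans ?_
    have h3 : ‖(y : ℂ) * Complex.I‖ = |y| := by simp
    rw [h3]
    have h4 : Real.exp |y| ≤ 4 := (Real.exp_le_exp.2 h).trans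
      (Real.exp_one_lt_d9.le.trans (by norm_num))
    have h5 : |y| ^ 3 = y ^ 2 * |y| := by rw [pow_succ, sq_abs]
    rw [h5]
    have h6 : 0 ≤ y ^ 2 * |y| := by positivity
    nlinarith
  · rw [min_eq_left h]
    have h1 : ‖Complex.exp (y * Complex.I)‖ = 1 := Complex.norm_exp_ofReal_mul_I y
    have h2 : ‖(1 + y * Complex.I - (y : ℂ) ^ 2 / 2)‖ ≤ 1 + |y| + y ^ 2 / 2 := by
      refine (norm_sub_le _ _).trans ?_
      gcongr
      · refine (norm_add_le _ _).trans ?_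
        simp
      · simp
    refine (norm_sub_le _ _).trans ?_
    rw [h1]
    have h3 : |y| ≤ y ^ 2 := by rw [← sq_abs]; nlinarith
    nlinarith

lemma lclt_expand {V : Type*} [NormedAddCommGroup V] [InnerProductSpace ℝ V]
    [FiniteDimensional ℝ V] [MeasurableSpace V] [BorelSpace V]
    (f : V → ℝ) (hfm : Measurable f) (hfnn : ∀ x, 0 ≤ f x) (hfi : Integrable f)
    (hfprob : ∫ x, f x = 1) (hm1 : ∀ t : V, Integrable (fun x => inner ℝ x t * f x))
    (hc : ∀ t : V, ∫ x, inner ℝ x t * f x = 0)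
    (hm2 : Integrable (fun x => ‖x‖ ^ 2 * f x)) (ε : ℝ) (hε : 0 < ε) :
    ∃ δ > 0, ∀ t : V, ‖t‖ ≤ δ →
      ‖𝓕 (fun x => (f x : ℂ)) t -
        ((1 - 2 * Real.pi ^ 2 * ∫ x, (inner ℝ x t) ^ 2 * f x : ℝ) : ℂ)‖ ≤ ε * ‖t‖ ^ 2 := by
  set M : ℝ := 4 * (2 * Real.pi) ^ 2 with hM
  have hω : Tendsto (fun s : ℝ => ∫ x, M * (‖x‖ ^ 2 * f x) * min 1 (2 * Real.pi * (‖x‖ * s)))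
      (𝓝[>] 0) (𝓝 (∫ x : V, (0 : ℝ))) := by
    refine tendsto_integral_filter_of_dominated_convergence
      (fun x => M * (‖x‖ ^ 2 * f x)) ?_ ?_ (hm2.const_mul M) ?_
    · refine Eventually.of_forall fun s => ?_
      exact ((((measurable_norm.pow_const 2).mul hfm).const_mul M).mul
        (measurable_const.min ((measurable_norm.mul_const s).const_mul _))).aestronglyMeasurable
    · filter_upwards [self_mem_nhdsWithin] with s hs
      refine ae_of_all _ fun x => ?_
      have hs' : (0:ℝ) < s := hs
      have h1 : 0 ≤ M * (‖x‖ ^ 2 * f x) := by have := hfnn x; positivity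
      have h2 : 0 ≤ min 1 (2 * Real.pi * (‖x‖ * s)) := by positivity
      rw [Real.norm_eq_abs, abs_of_nonneg (mul_nonneg h1 h2)]
      exact mul_le_of_le_one_right h1 (min_le_left _ _)
    · refine ae_of_all _ fun x => ?_
      have h1 : Tendsto (fun s : ℝ => M * (‖x‖ ^ 2 * f x) * min 1 (2 * Real.pi * (‖x‖ * s)))
        (𝓝 0) (𝓝 (M * (‖x‖ ^ 2 * f x) * min 1 (2 * Real.pi * (‖x‖ * 0)))) := by
        apply Continuous.tendsto
        fun_prop
      simp only [mul_zero] at h1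
      rw [min_eq_right (by norm_num), mul_zero] at h1
      exact h1.mono_left nhdsWithin_le_nhds
  rw [integral_zero] at hω
  have hev := hω.eventually (ge_mem_nhds hε)
  rw [eventually_nhdsWithin_iff, Metric.eventually_nhds_iff] at hev
  obtain ⟨δ, hδ, hev⟩ := hev
  refine ⟨δ / 2, by positivity, fun t ht => ?_⟩
  rcases eq_or_ne t 0 with rfl | ht0
  · simp only [Real.fourier_eq]
    simp [integral_complex_ofReal, hfprob]
  have htp : 0 < ‖t‖ := norm_pos_iff.2 ht0
  have hωt : ∫ x, M * (‖x‖ ^ 2 * f x) * min 1 (2 * Real.pi * (‖x‖ * ‖t‖)) ≤ ε := by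
    refine hev ?_ htp
    simp; linarith
  have hq : Integrable (fun x => (inner ℝ x t) ^ 2 * f x) := by
    refine (hm2.const_mul (‖t‖ ^ 2)).mono' ?_ (ae_of_all _ fun x => ?_)
    · exact (((measurable_id.inner measurable_const).pow_const 2).mul hfm).aestronglyMeasurable
    · rw [Real.norm_eq_abs, abs_of_nonneg (mul_nonneg (sq_nonneg _) (hfnn x)), ← mul_assoc]
      gcongr
      · exact hfnn x
      · rw [← sq_abs, ← mul_pow]
        gcongr
        rw [mul_comm]
        exact abs_real_inner_le_norm x t
  have hei : Integrable (fun x => Complex.exp (((-2 * Real.pi * inner ℝ x t : ℝ) : ℂ) * Complex.I)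
      * (f x : ℂ)) := by
    refine Integrable.bdd_mul (c := 1) hfi.ofReal ?_ (ae_of_all _ fun x => ?_)
    · apply Continuous.aestronglyMeasurable; fun_prop
    · rw [Complex.norm_exp_ofReal_mul_I]
  set y : V → ℝ := fun x => -2 * Real.pi * inner ℝ x t with hy
  have hpi : Integrable (fun x => (1 + (y x : ℂ) * Complex.I - (y x : ℂ) ^ 2 / 2) * (f x : ℂ)) := by
    have h1 : Integrable (fun x => ((f x : ℝ) : ℂ)) := hfi.ofReal
    have h2 : Integrable (fun x => ((inner ℝ x t * f x : ℝ) : ℂ)) := (hm1 t).ofReal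
    have h3 : Integrable (fun x => (((inner ℝ x t) ^ 2 * f x : ℝ) : ℂ)) := hq.ofReal
    refine ((h1.add (h2.const_mul (-2 * Real.pi * Complex.I))).sub
      (h3.const_mul (2 * Real.pi ^ 2))).congr (ae_of_all _ fun x => ?_)
    simp only [hy, Pi.add_apply, Pi.sub_apply]
    push_cast
    ring
  have hpe : ∫ x, (1 + (y x : ℂ) * Complex.I - (y x : ℂ) ^ 2 / 2) * (f x : ℂ) =
      ((1 - 2 * Real.pi ^ 2 * ∫ x, (inner ℝ x t) ^ 2 * f x : ℝ) : ℂ) := by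
    have h1 : Integrable (fun x => ((f x : ℝ) : ℂ)) := hfi.ofReal
    have h2 : Integrable (fun x => ((inner ℝ x t * f x : ℝ) : ℂ)) := (hm1 t).ofReal
    have h3 : Integrable (fun x => (((inner ℝ x t) ^ 2 * f x : ℝ) : ℂ)) := hq.ofReal
    have e : ∀ x, (1 + (y x : ℂ) * Complex.I - (y x : ℂ) ^ 2 / 2) * (f x : ℂ) =
        ((f x : ℝ) : ℂ) + (-2 * Real.pi * Complex.I) * ((inner ℝ x t * f x : ℝ) : ℂ)
        - (2 * Real.pi ^ 2) * (((inner ℝ x t) ^ 2 * f x : ℝ) : ℂ) := by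
      intro x
      simp only [hy]
      push_cast
      ring
    simp_rw [e]
    have h12 : Integrable (fun x => ((f x : ℝ) : ℂ) +
        (-2 * Real.pi * Complex.I) * ((inner ℝ x t * f x : ℝ) : ℂ)) :=
      h1.add (h2.const_mul (-2 * Real.pi * Complex.I))
    rw [integral_sub h12
      (h3.const_mul (2 * Real.pi ^ 2)), integral_add h1 (h2.const_mul (-2 * Real.pi * Complex.I)),
      integral_const_mul, integral_const_mul, integral_complex_ofReal, integral_complex_ofReal,
      integral_complex_ofReal, hc, hfprob]
    push_cast
    ring
  have hfe : 𝓕 (fun x => (f x : ℂ)) t = ∫ x, Complex.exp ((y x : ℂ) * Complex.I) * (f x : ℂ) := by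
    rw [Real.fourier_eq']
    rfl
  rw [hfe, ← hpe, ← integral_sub hei hpi]
  refine (norm_integral_le_integral_norm _).trans ?_
  calc ∫ x, ‖Complex.exp ((y x : ℂ) * Complex.I) * (f x : ℂ) -
        (1 + (y x : ℂ) * Complex.I - (y x : ℂ) ^ 2 / 2) * (f x : ℂ)‖
      ≤ ∫ x, ‖t‖ ^ 2 * (M * (‖x‖ ^ 2 * f x) * min 1 (2 * Real.pi * (‖x‖ * ‖t‖))) := by
        refine integral_mono (hei.sub hpi).norm ?_ fun x => ?_
        · refine Integrable.const_mul ?_ _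
          refine (hm2.const_mul M).mul_bdd (c := 1) ?_ (ae_of_all _ fun x => ?_)
          · apply Continuous.aestronglyMeasurable; fun_prop
          · rw [Real.norm_eq_abs, abs_of_nonneg (by positivity)]
            exact min_le_left _ _
        · dsimp only
          rw [← sub_mul, norm_mul, Complex.norm_real, Real.norm_eq_abs, abs_of_nonneg (hfnn x)]
          have h1 := lclt_exp_bound (y x)
          have h2 : |y x| ≤ 2 * Real.pi * (‖x‖ * ‖t‖) := by
            simp only [hy, abs_mul, abs_neg, abs_of_pos Real.pi_pos]
            norm_num
            gcongr
            exact abs_real_inner_le_norm x t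
          have h3 : (y x) ^ 2 ≤ (2 * Real.pi * (‖x‖ * ‖t‖)) ^ 2 := by
            rw [← sq_abs]; gcongr
          calc _ ≤ 4 * ((y x) ^ 2 * min 1 |y x|) * f x := by
                have := hfnn x; gcongr
            _ ≤ 4 * ((2 * Real.pi * (‖x‖ * ‖t‖)) ^ 2 * min 1 (2 * Real.pi * (‖x‖ * ‖t‖))) * f x := by
                have := hfnn x; gcongr
            _ = _ := by rw [hM]; ring
    _ ≤ _ := by
        rw [integral_const_mul, mul_comm ε]
        gcongr

lemma lclt_pointwise {V : Type*} [NormedAddCommGroup V] [InnerProductSpace ℝ V]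
    (φ : V → ℂ) (q : V → ℝ) (hq : ∀ (a : ℝ) t, q (a • t) = a ^ 2 * q t)
    (hexp : ∀ ε > 0, ∃ δ > 0, ∀ t : V, ‖t‖ ≤ δ →
      ‖φ t - ((1 - 2 * Real.pi ^ 2 * q t : ℝ) : ℂ)‖ ≤ ε * ‖t‖ ^ 2) (t : V) :
    Tendsto (fun n : ℕ => φ ((Real.sqrt n)⁻¹ • t) ^ n) atTop
      (𝓝 ((Real.exp (-(2 * Real.pi ^ 2 * q t)) : ℝ) : ℂ)) := by
  have hs : Tendsto (fun n : ℕ => (Real.sqrt n)⁻¹ * ‖t‖) atTop (𝓝 0) := by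
    have : Tendsto (fun n : ℕ => (Real.sqrt n)⁻¹) atTop (𝓝 0) :=
      tendsto_inv_atTop_zero.comp (Real.tendsto_sqrt_atTop.comp tendsto_natCast_atTop_atTop)
    simpa using this.mul_const ‖t‖
  have key : Tendsto (fun n : ℕ => (n : ℂ) * (φ ((Real.sqrt n)⁻¹ • t) - 1)) atTop
      (𝓝 ((-(2 * Real.pi ^ 2 * q t) : ℝ) : ℂ)) := by
    rw [Metric.tendsto_atTop']
    intro ε hε
    obtain ⟨δ, hδ, h⟩ := hexp (ε / (‖t‖ ^ 2 + 1)) (by positivity)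
    have h2 := hs.eventually (ge_mem_nhds hδ)
    obtain ⟨N, hN⟩ := eventually_atTop.1 h2
    refine ⟨N, fun n hn => ?_⟩
    have hn0 : (0:ℝ) < n := by exact_mod_cast (Nat.zero_le N).trans_lt hn
    have h3 := h ((Real.sqrt n)⁻¹ • t) (by
      rw [norm_smul, Real.norm_eq_abs, abs_of_nonneg (by positivity)]; exact hN n hn.le)
    rw [hq, norm_smul, Real.norm_eq_abs, abs_of_nonneg (by positivity), mul_pow, inv_pow,
      Real.sq_sqrt hn0.le] at h3
    rw [dist_eq_norm]
    have e : (n : ℂ) * (φ ((Real.sqrt n)⁻¹ • t) - 1) - ((-(2 * Real.pi ^ 2 * q t) : ℝ) : ℂ)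
        = (n : ℂ) * (φ ((Real.sqrt n)⁻¹ • t) -
          ((1 - 2 * Real.pi ^ 2 * ((n:ℝ)⁻¹ * q t) : ℝ) : ℂ)) := by
      have hn1 : (n : ℂ) ≠ 0 := by exact_mod_cast hn0.ne'
      push_cast
      field_simp
      ring
    rw [e, norm_mul, Complex.norm_natCast]
    calc (n:ℝ) * _ ≤ n * (ε / (‖t‖ ^ 2 + 1) * ((n:ℝ)⁻¹ * ‖t‖ ^ 2)) := by gcongr
      _ = ε * (‖t‖ ^ 2 / (‖t‖ ^ 2 + 1)) := by field_simp
      _ < ε * 1 := by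
          gcongr
          rw [div_lt_one (by positivity)]; linarith
      _ = ε := mul_one _
  have := Complex.tendsto_one_add_pow_exp_of_tendsto key
  rw [Complex.ofReal_exp]
  simpa using this

lemma lclt_gauss_integrable {V : Type*} [NormedAddCommGroup V] [InnerProductSpace ℝ V]
    [FiniteDimensional ℝ V] [MeasurableSpace V] [BorelSpace V] (c : ℝ) (hc : 0 < c) :
    Integrable (fun t : V => Real.exp (-(c * ‖t‖ ^ 2))) := by
  have := (GaussianFourier.integrable_cexp_neg_mul_sq_norm_add (V := V) (b := (c : ℂ))
    (by simpa using hc) 0 0).norm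
  refine this.congr (ae_of_all _ fun t => ?_)
  simp only [zero_mul, add_zero]
  rw [Complex.norm_exp]
  congr 1
  rw [← Complex.ofReal_pow, ← Complex.ofReal_neg, ← Complex.ofReal_mul, Complex.ofReal_re]
  ring

lemma lclt_L1 {V : Type*} [NormedAddCommGroup V] [InnerProductSpace ℝ V]
    [FiniteDimensional ℝ V] [MeasurableSpace V] [BorelSpace V]
    (φ : V → ℂ) (hφc : Continuous φ) (hφ1 : ∀ t, ‖φ t‖ ≤ 1)
    (q : V → ℝ) (hqc : Continuous q) (hq : ∀ (a : ℝ) t, q (a • t) = a ^ 2 * q t)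
    (c : ℝ) (hc : 0 < c) (hqlow : ∀ t, c * ‖t‖ ^ 2 ≤ q t)
    (C : ℝ) (hC : 0 < C) (hqup : ∀ t, q t ≤ C * ‖t‖ ^ 2)
    (N : ℕ) (hN : Integrable (fun t => φ t ^ N))
    (haway : ∀ δ > 0, ∃ η : ℝ, 0 ≤ η ∧ η < 1 ∧ ∀ t, δ ≤ ‖t‖ → ‖φ t‖ ≤ η)
    (hexp : ∀ ε > 0, ∃ δ > 0, ∀ t : V, ‖t‖ ≤ δ →
      ‖φ t - ((1 - 2 * Real.pi ^ 2 * q t : ℝ) : ℂ)‖ ≤ ε * ‖t‖ ^ 2) :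
    Tendsto (fun n : ℕ => ∫ t, ‖φ ((Real.sqrt n)⁻¹ • t) ^ n -
      ((Real.exp (-(2 * Real.pi ^ 2 * q t)) : ℝ) : ℂ)‖) atTop (𝓝 0) := by
  have hpi := Real.pi_pos
  set c' : ℝ := Real.pi ^ 2 * c with hc'
  have hc'0 : 0 < c' := by positivity
  obtain ⟨δ1, hδ1, hb1⟩ := hexp c' hc'0
  -- local Gaussian bound
  obtain ⟨δ, hδ, hloc⟩ : ∃ δ > 0, ∀ t : V, ‖t‖ ≤ δ → ‖φ t‖ ≤ Real.exp (-(c' * ‖t‖ ^ 2)) := by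
    refine ⟨min δ1 (Real.sqrt (1 / (2 * Real.pi ^ 2 * C))), lt_min hδ1 (by positivity),
      fun t ht => ?_⟩
    have h1 := hb1 t (ht.trans (min_le_left _ _))
    have h2 : ‖t‖ ^ 2 ≤ 1 / (2 * Real.pi ^ 2 * C) := by
      rw [← Real.sq_sqrt (show 0 ≤ 1 / (2 * Real.pi ^ 2 * C) by positivity)]
      have := ht.trans (min_le_right _ _)
      gcongr
    have h3 : 2 * Real.pi ^ 2 * q t ≤ 1 := by
      calc 2 * Real.pi ^ 2 * q t ≤ 2 * Real.pi ^ 2 * (C * ‖t‖ ^ 2) := by gcongr; exact hqup t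
        _ ≤ 2 * Real.pi ^ 2 * (C * (1 / (2 * Real.pi ^ 2 * C))) := by gcongr
        _ = 1 := by field_simp
    have h4 : ‖((1 - 2 * Real.pi ^ 2 * q t : ℝ) : ℂ)‖ = 1 - 2 * Real.pi ^ 2 * q t := by
      rw [Complex.norm_real, Real.norm_eq_abs, abs_of_nonneg (by linarith)]
    have h5 : ‖φ t‖ ≤ ‖φ t - ((1 - 2 * Real.pi ^ 2 * q t : ℝ) : ℂ)‖ +
        ‖((1 - 2 * Real.pi ^ 2 * q t : ℝ) : ℂ)‖ := by
      have := norm_add_le (φ t - ((1 - 2 * Real.pi ^ 2 * q t : ℝ) : ℂ))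
        ((1 - 2 * Real.pi ^ 2 * q t : ℝ) : ℂ)
      rwa [sub_add_cancel] at this
    have h6 : 2 * Real.pi ^ 2 * (c * ‖t‖ ^ 2) ≤ 2 * Real.pi ^ 2 * q t := by
      gcongr; exact hqlow t
    have h7 := Real.add_one_le_exp (-(c' * ‖t‖ ^ 2))
    rw [h4] at h5
    have h8 : 2 * Real.pi ^ 2 * (c * ‖t‖ ^ 2) = 2 * (c' * ‖t‖ ^ 2) := by rw [hc']; ring
    linarith
  obtain ⟨η, hη0, hη1, hη⟩ := haway δ hδ
  set E : V → ℝ := fun t => Real.exp (-(2 * Real.pi ^ 2 * q t)) with hE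
  have hEc : Continuous E := by fun_prop
  have hEle : ∀ t, E t ≤ Real.exp (-(c' * ‖t‖ ^ 2)) := by
    intro t
    apply Real.exp_le_exp.2
    have h6 : 2 * Real.pi ^ 2 * (c * ‖t‖ ^ 2) ≤ 2 * Real.pi ^ 2 * q t := by
      gcongr; exact hqlow t
    have h8 : 2 * Real.pi ^ 2 * (c * ‖t‖ ^ 2) = 2 * (c' * ‖t‖ ^ 2) := by rw [hc']; ring
    have : 0 ≤ c' * ‖t‖ ^ 2 := by positivity
    linarith
  have hE0 : ∀ t, 0 ≤ E t := fun t => (Real.exp_pos _).le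
  have hgi := lclt_gauss_integrable (V := V) c' hc'0
  set D : ℕ → V → ℝ := fun n t => ‖φ ((Real.sqrt n)⁻¹ • t) ^ n - (E t : ℂ)‖ with hD
  have hDc : ∀ n, Continuous (D n) := by
    intro n
    have := hφc.comp (continuous_const_smul (Real.sqrt n)⁻¹ (T := V))
    exact ((this.pow n).sub (Complex.continuous_ofReal.comp hEc)).norm
  set S : ℕ → Set V := fun n => {t | ‖t‖ ≤ δ * Real.sqrt n} with hS
  have hSm : ∀ n, MeasurableSet (S n) := fun n => measurableSet_le measurable_norm measurable_const
  set a : ℕ → V → ℝ := fun n => (S n).piecewise (D n) E with ha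
  have ham : ∀ n, AEStronglyMeasurable (a n) volume := fun n =>
    (((hDc n).measurable.piecewise (hSm n) hEc.measurable)).aestronglyMeasurable
  have hnsc : ∀ n : ℕ, ∀ t : V, ‖(Real.sqrt n)⁻¹ • t‖ = (Real.sqrt n)⁻¹ * ‖t‖ := by
    intro n t
    rw [norm_smul, Real.norm_eq_abs, abs_of_nonneg (by positivity)]
  have habd : ∀ n : ℕ, 1 ≤ n → ∀ t, ‖a n t‖ ≤ 2 * Real.exp (-(c' * ‖t‖ ^ 2)) := by
    intro n hn t
    have hn0 : (0:ℝ) < n := by exact_mod_cast hn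
    have hsq : 0 < Real.sqrt n := Real.sqrt_pos.2 hn0
    by_cases ht : t ∈ S n
    · simp only [ha, Set.piecewise_eq_of_mem _ _ _ ht, hD, norm_norm]
      refine (norm_sub_le _ _).trans ?_
      rw [two_mul]
      refine add_le_add ?_ ?_
      · rw [norm_pow]
        have h1 := hloc ((Real.sqrt n)⁻¹ • t) (by
          rw [hnsc, inv_mul_le_iff₀ hsq, mul_comm]; exact ht)
        calc _ ≤ (Real.exp (-(c' * ‖(Real.sqrt n)⁻¹ • t‖ ^ 2))) ^ n := by gcongr
          _ = _ := by
            rw [← Real.exp_nat_mul, hnsc, mul_pow, inv_pow, Real.sq_sqrt hn0.le]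
            congr 1
            field_simp
      · rw [Complex.norm_real, Real.norm_eq_abs, abs_of_nonneg (hE0 t)]; exact hEle t
    · simp only [ha, Set.piecewise_eq_of_notMem _ _ _ ht, Real.norm_eq_abs, abs_of_nonneg (hE0 t)]
      have := hEle t
      have h3 := Real.exp_pos (-(c' * ‖t‖ ^ 2))
      linarith
  have halim : Tendsto (fun n => ∫ t, a n t) atTop (𝓝 0) := by
    rw [show (0:ℝ) = ∫ t : V, (0:ℝ) by simp]
    refine tendsto_integral_filter_of_dominated_convergence
      (fun t => 2 * Real.exp (-(c' * ‖t‖ ^ 2))) (Eventually.of_forall ham) ?_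
      (hgi.const_mul 2) (ae_of_all _ fun t => ?_)
    · filter_upwards [eventually_ge_atTop 1] with n hn
      exact ae_of_all _ (habd n hn)
    · have h1 := (lclt_pointwise φ q hq hexp t).sub_const (E t : ℂ)
      rw [sub_self] at h1
      have h2 := h1.norm
      rw [norm_zero] at h2
      refine h2.congr' ?_
      have h3 : Tendsto (fun n : ℕ => δ * Real.sqrt n) atTop atTop :=
        (Real.tendsto_sqrt_atTop.comp tendsto_natCast_atTop_atTop).const_mul_atTop hδ
      filter_upwards [h3.eventually_ge_atTop ‖t‖] with n hn
      have ht : t ∈ S n := hn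
      simp only [ha, Set.piecewise_eq_of_mem _ _ _ ht, hD]
  set J : ℝ := ∫ t, ‖φ t ^ N‖ with hJ
  have hbi : ∀ n : ℕ, 1 ≤ n → Integrable (fun t => ‖φ ((Real.sqrt n)⁻¹ • t) ^ N‖) := by
    intro n hn
    have hn0 : (0:ℝ) < n := by exact_mod_cast hn
    exact hN.norm.comp_smul (inv_ne_zero (Real.sqrt_pos.2 hn0).ne')
  set d := Module.finrank ℝ V with hd
  have hbint : ∀ n : ℕ, ∫ t, ‖φ ((Real.sqrt n)⁻¹ • t) ^ N‖ = (Real.sqrt n) ^ d * J := by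
    intro n
    rw [Measure.integral_comp_inv_smul volume (fun t => ‖φ t ^ N‖), abs_of_nonneg (by positivity),
      smul_eq_mul]
  have hblim : Tendsto (fun n : ℕ => η ^ (n - N) * ((Real.sqrt n) ^ d * J)) atTop (𝓝 0) := by
    have h1 : Tendsto (fun m : ℕ => (m:ℝ) ^ d * η ^ m) atTop (𝓝 0) :=
      tendsto_pow_const_mul_const_pow_of_lt_one d hη0 hη1
    have h2 : Tendsto (fun m : ℕ => (((N:ℝ) + 1) ^ d * J) * ((m:ℝ) ^ d * η ^ m)) atTop (𝓝 0) := by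
      simpa using h1.const_mul (((N:ℝ) + 1) ^ d * J)
    have h3 := h2.comp (tendsto_sub_atTop_nat N)
    have hJ0 : 0 ≤ J := integral_nonneg fun t => norm_nonneg _
    refine squeeze_zero' (Eventually.of_forall fun n => by positivity) ?_ h3
    filter_upwards [eventually_ge_atTop (N + 1)] with n hn
    simp only [Function.comp]
    have h4 : Real.sqrt n ≤ ((N:ℝ) + 1) * ((n - N : ℕ) : ℝ) := by
      have h5 : (1:ℝ) ≤ n := by exact_mod_cast (by omega : 1 ≤ n)
      have h6 : Real.sqrt n ≤ n := by
        rw [Real.sqrt_le_left (by linarith)]; nlinarith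
      refine h6.trans ?_
      have h7 : n ≤ (N + 1) * (n - N) := by
        obtain ⟨m, rfl⟩ := Nat.exists_eq_add_of_le hn
        rw [show N + 1 + m - N = m + 1 by omega]
        nlinarith
      exact_mod_cast h7
    calc η ^ (n - N) * ((Real.sqrt n) ^ d * J)
        ≤ η ^ (n - N) * ((((N:ℝ) + 1) * ((n - N : ℕ) : ℝ)) ^ d * J) := by gcongr
      _ = _ := by rw [mul_pow]; ring
  have hsum := halim.add hblim
  rw [add_zero] at hsum
  refine squeeze_zero' (Eventually.of_forall fun n => integral_nonneg fun t => norm_nonneg _) ?_ hsum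
  filter_upwards [eventually_ge_atTop (N + 1)] with n hn
  have hn1 : 1 ≤ n := by omega
  have hn0 : (0:ℝ) < n := by exact_mod_cast hn1
  have hsq : 0 < Real.sqrt n := Real.sqrt_pos.2 hn0
  have hai : Integrable (a n) := (hgi.const_mul 2).mono' (ham n) (ae_of_all _ (habd n hn1))
  rw [← hbint, ← integral_const_mul, ← integral_add hai ((hbi n hn1).const_mul _)]
  refine integral_mono_of_nonneg (ae_of_all _ fun t => norm_nonneg _)
    (hai.add ((hbi n hn1).const_mul _)) (ae_of_all _ fun t => ?_)
  dsimp only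
  by_cases ht : t ∈ S n
  · simp only [ha, Set.piecewise_eq_of_mem _ _ _ ht, hD]
    refine le_add_of_nonneg_right (by positivity)
  · simp only [ha, Set.piecewise_eq_of_notMem _ _ _ ht]
    refine (norm_sub_le _ _).trans ?_
    rw [add_comm, Complex.norm_real, Real.norm_eq_abs]
    refine add_le_add (le_of_eq (abs_of_nonneg (hE0 t))) ?_
    have h1 : ‖φ ((Real.sqrt n)⁻¹ • t)‖ ≤ η := by
      apply hη
      rw [hnsc, le_inv_mul_iff₀ hsq, mul_comm]
      exact (not_le.1 ht).le
    rw [norm_pow, norm_pow]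
    calc _ = ‖φ ((Real.sqrt n)⁻¹ • t)‖ ^ (n - N) * ‖φ ((Real.sqrt n)⁻¹ • t)‖ ^ N := by
          rw [← pow_add]; congr 1; omega
      _ ≤ _ := by gcongr

open scoped MatrixOrder in
lemma lclt_factor (k : ℕ) (C : Matrix (Fin k) (Fin k) ℝ) (hC : C.PosDef) :
    ∃ B : Matrix (Fin k) (Fin k) ℝ, C = Bᵀ * B ∧ B.det ≠ 0 := by
  obtain ⟨B, hB⟩ := CStarAlgebra.nonneg_iff_eq_star_mul_self.mp hC.posSemidef.nonneg
  have hB' : C = Bᵀ * B := by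
    rw [hB, star_eq_conjTranspose, conjTranspose_eq_transpose_of_trivial]
  refine ⟨B, hB', fun h => ?_⟩
  have := hC.det_pos
  rw [hB', det_mul, h] at this
  simp at this

lemma lclt_det (k : ℕ) (B : Matrix (Fin k) (Fin k) ℝ) :
    LinearMap.det (Matrix.toEuclideanLin B) = B.det := by
  rw [Matrix.toEuclideanLin_eq_toLin_orthonormal, LinearMap.det_toLin]

lemma lclt_chvar {V : Type*} [NormedAddCommGroup V] [InnerProductSpace ℝ V]
    [FiniteDimensional ℝ V] [MeasurableSpace V] [BorelSpace V] (L : V →ₗ[ℝ] V)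
    (hL : LinearMap.det L ≠ 0) (h : V → ℂ) (hh : Continuous h) :
    ∫ t, h (L t) = (((|LinearMap.det L|)⁻¹ : ℝ) : ℂ) * ∫ t, h t := by
  have hc : Continuous L := L.continuous_of_finiteDimensional
  have := Measure.map_linearMap_addHaar_eq_smul_addHaar (volume : Measure V) hL
  rw [← integral_map hc.aemeasurable hh.aestronglyMeasurable, this, integral_smul_measure,
    ENNReal.toReal_ofReal (abs_nonneg _), abs_inv]
  simp

lemma lclt_inner_mul (k : ℕ) (B : Matrix (Fin k) (Fin k) ℝ) (s t : EuclideanSpace ℝ (Fin k)) :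
    inner ℝ (Matrix.toEuclideanLin B s) t = inner ℝ s (Matrix.toEuclideanLin Bᵀ t) := by
  simp only [Matrix.toLpLin_apply, EuclideanSpace.inner_eq_star_dotProduct, star_trivial]
  rw [dotProduct_mulVec, ← mulVec_transpose]

lemma lclt_gauss (k : ℕ) (C B : Matrix (Fin k) (Fin k) ℝ) (hB : C = Bᵀ * B) (hd : B.det ≠ 0)
    (v : Fin k → ℝ) :
    𝓕⁻ (fun t : EuclideanSpace ℝ (Fin k) =>
      ((Real.exp (-(2 * Real.pi ^ 2 * ‖Matrix.toEuclideanLin B t‖ ^ 2)) : ℝ) : ℂ)) (WithLp.toLp 2 v)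
    = (((2 * Real.pi) ^ (-(k : ℝ) / 2) * C.det ^ (-(1 : ℝ) / 2) *
        Real.exp (-(v ⬝ᵥ C⁻¹.mulVec v) / 2) : ℝ) : ℂ) := by
  have hdt : IsUnit (Bᵀ).det := by rw [det_transpose]; exact hd.isUnit
  set w : EuclideanSpace ℝ (Fin k) := WithLp.toLp 2 ((Bᵀ)⁻¹ *ᵥ v) with hw
  have hin : ∀ t, inner ℝ t (WithLp.toLp 2 v : EuclideanSpace ℝ (Fin k))
      = inner ℝ (Matrix.toEuclideanLin B t) w := by
    intro t
    rw [lclt_inner_mul]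
    congr 1
    rw [hw, Matrix.toLpLin_apply]
    simp only
    rw [mulVec_mulVec, Matrix.mul_nonsing_inv _ hdt, one_mulVec]
  have hwn : ‖w‖ ^ 2 = v ⬝ᵥ C⁻¹.mulVec v := by
    rw [← real_inner_self_eq_norm_sq, EuclideanSpace.inner_eq_star_dotProduct, star_trivial, hw]
    simp only
    rw [hB, Matrix.mul_inv_rev, ← mulVec_mulVec, dotProduct_mulVec, dotProduct_mulVec,
      ← mulVec_transpose B⁻¹, ← transpose_nonsing_inv, ← mulVec_transpose, dotProduct_mulVec,
      ← mulVec_transpose]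
  have hb : (0:ℝ) < ((2 * Real.pi ^ 2 : ℝ) : ℂ).re := by
    rw [Complex.ofReal_re]; positivity
  have hG := fourier_gaussian_innerProductSpace hb (-w)
  have hinv : 𝓕⁻ (fun t : EuclideanSpace ℝ (Fin k) =>
      ((Real.exp (-(2 * Real.pi ^ 2 * ‖Matrix.toEuclideanLin B t‖ ^ 2)) : ℝ) : ℂ)) (WithLp.toLp 2 v)
      = (((|B.det|)⁻¹ : ℝ) : ℂ) * 𝓕⁻ (fun t : EuclideanSpace ℝ (Fin k) =>
        Complex.exp (-((2 * Real.pi ^ 2 : ℝ) : ℂ) * ‖t‖ ^ 2)) w := by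
    rw [Real.fourierInv_eq, Real.fourierInv_eq, ← lclt_det, ← lclt_chvar]
    · refine integral_congr_ae (Eventually.of_forall fun t => ?_)
      simp only [hin]
      congr 1
      push_cast
      congr 1
      ring
    · rw [lclt_det]; exact hd
    · fun_prop
  rw [hinv, Real.fourierInv_eq_fourier_neg, hG, norm_neg]
  have hdetC : C.det = |B.det| ^ 2 := by rw [hB, det_mul, det_transpose, sq_abs]; ring
  have h1 : (|B.det|)⁻¹ = C.det ^ (-(1 : ℝ) / 2) := by
    rw [hdetC, ← Real.rpow_natCast, ← Real.rpow_mul (abs_nonneg _), ← Real.rpow_neg_one]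
    norm_num
  have h2 : ((Real.pi / ((2 * Real.pi ^ 2 : ℝ) : ℂ)) ^ (Module.finrank ℝ (EuclideanSpace ℝ (Fin k)) / 2 : ℂ))
      = (((2 * Real.pi) ^ (-(k : ℝ) / 2) : ℝ) : ℂ) := by
    have : (Real.pi / ((2 * Real.pi ^ 2 : ℝ) : ℂ)) = (((2 * Real.pi)⁻¹ : ℝ) : ℂ) := by
      rw [← Complex.ofReal_div]
      congr 1
      have := Real.pi_ne_zero
      field_simp
    rw [this, finrank_euclideanSpace_fin, neg_div, Real.rpow_neg (by positivity),
      ← Real.inv_rpow (by positivity), Complex.ofReal_cpow (by positivity)]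
    push_cast; rfl
  have h3 : Complex.exp (-(Real.pi:ℂ) ^ 2 * ‖w‖ ^ 2 / ((2 * Real.pi ^ 2 : ℝ) : ℂ))
      = ((Real.exp (-(v ⬝ᵥ C⁻¹.mulVec v) / 2) : ℝ) : ℂ) := by
    rw [← hwn]
    push_cast
    congr 1
    have : (Real.pi : ℂ) ≠ 0 := by exact_mod_cast Real.pi_ne_zero
    field_simp
  rw [h1, h2, h3]
  push_cast
  ring

lemma lclt_tr_int (k : ℕ) (g : (Fin k → ℝ) → ℝ) :
    ∫ x : EuclideanSpace ℝ (Fin k), g (WithLp.ofLp x) = ∫ x, g x :=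
  (PiLp.volume_preserving_ofLp (Fin k)).integral_comp
    (MeasurableEquiv.toLp 2 (Fin k → ℝ)).symm.measurableEmbedding g

lemma lclt_tr_integrable (k : ℕ) {g : (Fin k → ℝ) → ℝ} (hg : Integrable g) :
    Integrable (fun x : EuclideanSpace ℝ (Fin k) => g (WithLp.ofLp x)) :=
  ((PiLp.volume_preserving_ofLp (Fin k)).integrable_comp_emb
    (MeasurableEquiv.toLp 2 (Fin k → ℝ)).symm.measurableEmbedding).2 hg

lemma lclt_q_bounds {V : Type*} [NormedAddCommGroup V] [InnerProductSpace ℝ V]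
    [FiniteDimensional ℝ V] (L : V →ₗ[ℝ] V) (hL : LinearMap.det L ≠ 0) :
    (∃ c > 0, ∀ t, c * ‖t‖ ^ 2 ≤ ‖L t‖ ^ 2) ∧ (∃ D > 0, ∀ t, ‖L t‖ ^ 2 ≤ D * ‖t‖ ^ 2) := by
  constructor
  · have hker : LinearMap.ker L = ⊥ := by
      by_contra h
      exact hL (LinearMap.det_eq_zero_iff_ker_ne_bot.2 h)
    obtain ⟨K, hK, hanti⟩ := L.exists_antilipschitzWith hker
    refine ⟨((K : ℝ) ^ 2)⁻¹, by positivity, fun t => ?_⟩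
    have h1 : ‖t‖ ≤ K * ‖L t‖ := by
      simpa using hanti.le_mul_dist t 0
    rw [inv_mul_le_iff₀ (by positivity), ← mul_pow]
    exact pow_le_pow_left₀ (norm_nonneg _) h1 2
  · refine ⟨‖LinearMap.toContinuousLinearMap L‖ ^ 2 + 1, by positivity, fun t => ?_⟩
    have h1 : ‖L t‖ ≤ ‖LinearMap.toContinuousLinearMap L‖ * ‖t‖ :=
      (LinearMap.toContinuousLinearMap L).le_opNorm t
    calc ‖L t‖ ^ 2 ≤ (‖LinearMap.toContinuousLinearMap L‖ * ‖t‖) ^ 2 :=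
          pow_le_pow_left₀ (norm_nonneg _) h1 2
      _ ≤ _ := by rw [mul_pow]; nlinarith [sq_nonneg ‖t‖]

lemma lclt_inner_sum (k : ℕ) (x t : EuclideanSpace ℝ (Fin k)) :
    inner ℝ x t = ∑ j, t j * x j := by
  simp [PiLp.inner_apply]

lemma lclt_q_formula (k : ℕ) (f : (Fin k → ℝ) → ℝ)
    (hmom2 : ∀ j l, Integrable fun x => x j * x l * f x)
    (C B : Matrix (Fin k) (Fin k) ℝ) (hC : ∀ j l, C j l = ∫ x, x j * x l * f x)
    (hB : C = Bᵀ * B) (t : EuclideanSpace ℝ (Fin k)) :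
    ∫ x : EuclideanSpace ℝ (Fin k), (inner ℝ x t) ^ 2 * f (WithLp.ofLp x)
      = ‖Matrix.toEuclideanLin B t‖ ^ 2 := by
  have h1 : ∀ x : EuclideanSpace ℝ (Fin k), (inner ℝ x t) ^ 2 * f (WithLp.ofLp x)
      = ∑ j, ∑ l, t j * t l * (x j * x l * f (WithLp.ofLp x)) := by
    intro x
    rw [lclt_inner_sum, sq, Finset.sum_mul_sum, Finset.sum_mul]
    refine Finset.sum_congr rfl fun j _ => ?_
    rw [Finset.sum_mul]
    exact Finset.sum_congr rfl fun l _ => by ring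
  simp_rw [h1]
  have hi : ∀ j l, Integrable (fun x : EuclideanSpace ℝ (Fin k) =>
      t j * t l * (x j * x l * f (WithLp.ofLp x))) := fun j l =>
    (lclt_tr_integrable k (hmom2 j l)).const_mul _
  rw [integral_finset_sum _ fun j _ => integrable_finset_sum _ fun l _ => hi j l]
  have h2 : ∀ j l, ∫ x : EuclideanSpace ℝ (Fin k), t j * t l * (x j * x l * f (WithLp.ofLp x))
      = t j * t l * C j l := by
    intro j l
    rw [integral_const_mul, hC, ← lclt_tr_int k (fun x => x j * x l * f x)]
  have h3 : ∀ j, ∫ x : EuclideanSpace ℝ (Fin k), ∑ l, t j * t l * (x j * x l * f (WithLp.ofLp x))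
      = ∑ l, t j * t l * C j l := by
    intro j
    rw [integral_finset_sum _ fun l _ => hi j l]
    simp_rw [h2]
  simp_rw [h3]
  rw [← real_inner_self_eq_norm_sq, lclt_inner_mul, EuclideanSpace.inner_eq_star_dotProduct,
    star_trivial, Matrix.toLpLin_apply, Matrix.toLpLin_apply, mulVec_mulVec, ← hB,
    dotProduct_comm]
  simp only [dotProduct, mulVec, Finset.mul_sum]
  exact Finset.sum_congr rfl fun j _ => Finset.sum_congr rfl fun l _ => by ring

lemma lclt_moments (k : ℕ) (f : (Fin k → ℝ) → ℝ)
    (hmom1int : ∀ j, Integrable fun x => x j * f x)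
    (hcent : ∀ j, ∫ x, x j * f x = 0)
    (hmom2 : ∀ j l, Integrable fun x => x j * x l * f x) :
    (∀ t : EuclideanSpace ℝ (Fin k), Integrable (fun x : EuclideanSpace ℝ (Fin k) =>
      inner ℝ x t * f (WithLp.ofLp x))) ∧
    (∀ t : EuclideanSpace ℝ (Fin k), ∫ x : EuclideanSpace ℝ (Fin k),
      inner ℝ x t * f (WithLp.ofLp x) = 0) ∧
    Integrable (fun x : EuclideanSpace ℝ (Fin k) => ‖x‖ ^ 2 * f (WithLp.ofLp x)) := by
  have h1 : ∀ x t : EuclideanSpace ℝ (Fin k), inner ℝ x t * f (WithLp.ofLp x)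
      = ∑ j, t j * (x j * f (WithLp.ofLp x)) := by
    intro x t
    rw [lclt_inner_sum, Finset.sum_mul]
    exact Finset.sum_congr rfl fun j _ => by ring
  have hi : ∀ (t : EuclideanSpace ℝ (Fin k)) j, Integrable (fun x : EuclideanSpace ℝ (Fin k) =>
      t j * (x j * f (WithLp.ofLp x))) := fun t j =>
    (lclt_tr_integrable k (hmom1int j)).const_mul _
  refine ⟨fun t => ?_, fun t => ?_, ?_⟩
  · simp_rw [h1]
    exact integrable_finset_sum _ fun j _ => hi t j
  · simp_rw [h1]
    rw [integral_finset_sum _ fun j _ => hi t j]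
    refine Finset.sum_eq_zero fun j _ => ?_
    rw [integral_const_mul, lclt_tr_int k (fun x => x j * f x), hcent, mul_zero]
  · have : ∀ x : EuclideanSpace ℝ (Fin k), ‖x‖ ^ 2 * f (WithLp.ofLp x)
        = ∑ j, x j * x j * f (WithLp.ofLp x) := by
      intro x
      rw [← real_inner_self_eq_norm_sq, lclt_inner_sum, Finset.sum_mul]
    simp_rw [this]
    exact integrable_finset_sum _ fun j _ => lclt_tr_integrable k (hmom2 j j)

lemma lclt_scale (k : ℕ) (φ : EuclideanSpace ℝ (Fin k) → ℂ) (n : ℕ) (hn : 0 < n)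
    (v : EuclideanSpace ℝ (Fin k)) :
    (((n : ℝ) ^ ((k : ℝ) / 2) : ℝ) : ℂ) * 𝓕⁻ (fun t => φ t ^ n) (Real.sqrt n • v)
      = 𝓕⁻ (fun t => φ ((Real.sqrt n)⁻¹ • t) ^ n) v := by
  have hs : 0 < Real.sqrt n := Real.sqrt_pos.2 (by exact_mod_cast hn)
  have h0 : (n : ℝ) ^ ((k : ℝ) / 2) = Real.sqrt n ^ k := by
    rw [Real.sqrt_eq_rpow, ← Real.rpow_natCast, ← Real.rpow_mul (Nat.cast_nonneg n)]
    congr 1; ring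
  rw [Real.fourierInv_eq, Real.fourierInv_eq, h0]
  have := Measure.integral_comp_inv_smul_of_nonneg (volume : Measure (EuclideanSpace ℝ (Fin k)))
    (fun t => Real.fourierChar (inner ℝ t (Real.sqrt n • v)) • φ t ^ n) hs.le
  rw [finrank_euclideanSpace_fin, Complex.real_smul] at this
  rw [← this]
  refine integral_congr_ae (Eventually.of_forall fun t => ?_)
  simp only
  rw [real_inner_smul_left, real_inner_smul_right, inv_mul_cancel_left₀ hs.ne']

lemma lclt_inv_norm_le {V : Type*} [NormedAddCommGroup V] [InnerProductSpace ℝ V]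
    [FiniteDimensional ℝ V] [MeasurableSpace V] [BorelSpace V] (f g : V → ℂ)
    (hf : Integrable f) (hg : Integrable g) (v : V) :
    ‖𝓕⁻ f v - 𝓕⁻ g v‖ ≤ ∫ x, ‖f x - g x‖ := by
  rw [Real.fourierInv_eq_fourier_neg, Real.fourierInv_eq_fourier_neg]
  have : 𝓕 f (-v) - 𝓕 g (-v) = 𝓕 (f - g) (-v) := by
    rw [Real.fourier_eq, Real.fourier_eq, Real.fourier_eq, ← integral_sub]
    · simp [smul_sub]
    · exact (Real.fourierIntegral_convergent_iff (-v)).2 hf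
    · exact (Real.fourierIntegral_convergent_iff (-v)).2 hg
  rw [this]
  exact lclt_norm_le _ _

end LCLT

/-- Multivariate local central limit theorem: if `f` is the common
density of i.i.d. centered random vectors in `ℝ^k` with `f ∈ L^r` for some `r ∈ (1,2]`,
finite second moments and positive definite covariance matrix `C` (so
`C j l = ∫ v_j v_l f(v) dv`), then `n^{k/2} f^{(n)}(√n · v)` converges uniformly on `ℝ^k` to
the Gaussian density `(2π)^{−k/2} (det C)^{−1/2} exp(−⟨v, C⁻¹ v⟩/2)`, where `f^{(n)}` is the
`n`-fold convolution of `f`. -/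
theorem multivariate_local_clt
    (k : ℕ) (r : ℝ) (hr1 : 1 < r) (hr2 : r ≤ 2)
    (f : (Fin k → ℝ) → ℝ)
    (hfmeas : Measurable f) (hfnn : ∀ x, 0 ≤ f x) (hfprob : ∫ x, f x = 1)
    (hLr : Integrable fun x => |f x| ^ r)
    (hmom1int : ∀ j, Integrable fun x => x j * f x)
    (hcent : ∀ j, ∫ x, x j * f x = 0)
    (hmom2 : ∀ j l, Integrable fun x => x j * x l * f x)
    (C : Matrix (Fin k) (Fin k) ℝ)
    (hC : ∀ j l, C j l = ∫ x, x j * x l * f x)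
    (hCpos : C.PosDef) :
    TendstoUniformly
      (fun (n : ℕ) (v : Fin k → ℝ) =>
        (n : ℝ) ^ ((k : ℝ) / 2) * convPow k f n (Real.sqrt n • v))
      (fun v => (2 * Real.pi) ^ (-(k : ℝ) / 2) * C.det ^ (-(1 : ℝ) / 2) *
        Real.exp (-(v ⬝ᵥ C⁻¹.mulVec v) / 2))
      atTop := by
  have hfi : Integrable f := by
    by_contra h
    rw [integral_undef h] at hfprob
    exact zero_ne_one hfprob
  obtain ⟨B, hB, hd⟩ := lclt_factor k C hCpos
  set F : EuclideanSpace ℝ (Fin k) → ℝ := fun x => f (WithLp.ofLp x) with hF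
  have hFm : Measurable F :=
    hfmeas.comp (PiLp.volume_preserving_ofLp (Fin k)).measurable
  have hFnn : ∀ x, 0 ≤ F x := fun x => hfnn _
  have hFi : Integrable F := lclt_tr_integrable k hfi
  have hFprob : ∫ x, F x = 1 := by rw [hF, lclt_tr_int, hfprob]
  have hFr : Integrable fun x => |F x| ^ r := lclt_tr_integrable k hLr
  obtain ⟨hm1, hc, hm2⟩ := lclt_moments k f hmom1int hcent hmom2
  set φ : EuclideanSpace ℝ (Fin k) → ℂ :=
    FourierTransform.fourier (fun x => (F x : ℂ)) with hφ
  have hFiC : Integrable (fun x => (F x : ℂ)) := hFi.ofReal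
  have hφc : Continuous φ := lclt_cont hFiC
  have hφ1 : ∀ t, ‖φ t‖ ≤ 1 := by
    intro t
    refine (lclt_norm_le _ t).trans (le_of_eq ?_)
    rw [← hFprob]
    refine integral_congr_ae (Eventually.of_forall fun x => ?_)
    simp [abs_of_nonneg (hFnn x)]
  obtain ⟨N, hN1, hN⟩ := lclt_pow_integrable r hr1 F hFm hFnn hFi hFprob hFr
  have hdL : LinearMap.det (Matrix.toEuclideanLin B) ≠ 0 := by rw [lclt_det]; exact hd
  obtain ⟨⟨c, hc0, hlow⟩, ⟨D, hD0, hup⟩⟩ := lclt_q_bounds (Matrix.toEuclideanLin B) hdL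
  have hLc : Continuous (Matrix.toEuclideanLin B) :=
    LinearMap.continuous_of_finiteDimensional _
  set E : EuclideanSpace ℝ (Fin k) → ℂ := fun t =>
    ((Real.exp (-(2 * Real.pi ^ 2 * ‖Matrix.toEuclideanLin B t‖ ^ 2)) : ℝ) : ℂ) with hE
  have hL1 : Tendsto (fun n : ℕ => ∫ t, ‖φ ((Real.sqrt n)⁻¹ • t) ^ n - E t‖) atTop (𝓝 0) := by
    refine lclt_L1 φ hφc hφ1 (fun t => ‖Matrix.toEuclideanLin B t‖ ^ 2) (by fun_prop) ?_ c hc0 hlow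
      D hD0 hup N hN ?_ ?_
    · intro a t
      simp only [map_smul, norm_smul, mul_pow, Real.norm_eq_abs, sq_abs]
    · intro δ hδ
      exact lclt_away F hFnn hFi hFprob δ hδ
    · intro ε hε
      obtain ⟨δ, hδ, h⟩ := lclt_expand F hFm hFnn hFi hFprob hm1 hc hm2 ε hε
      refine ⟨δ, hδ, fun t ht => ?_⟩
      have := h t ht
      rw [lclt_q_formula k f hmom2 C B hC hB t] at this
      exact this
  have hEi : Integrable E := by
    refine (lclt_gauss_integrable (V := EuclideanSpace ℝ (Fin k)) (2 * Real.pi ^ 2 * c)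
      (by positivity)).mono' (by fun_prop) (Eventually.of_forall fun t => ?_)
    rw [hE]
    simp only
    rw [Complex.norm_real, Real.norm_eq_abs, Real.abs_exp]
    refine Real.exp_le_exp.2 ?_
    have := mul_le_mul_of_nonneg_left (hlow t) (show 0 ≤ 2 * Real.pi ^ 2 by positivity)
    linarith
  have hpow : ∀ m, N ≤ m → Integrable (fun t => φ t ^ m) := by
    intro m hm
    refine hN.norm.mono' (by fun_prop) (Eventually.of_forall fun t => ?_)
    rw [norm_pow, norm_pow]
    exact pow_le_pow_of_le_one (norm_nonneg _) (hφ1 t) hm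
  have hcp := lclt_cp_eq F hFi (fun n x => convPow k f n (WithLp.ofLp x))
    (by simp only [convPow]; rfl)
    (by
      intro n x
      simp only [convPow, convK, hF]
      rw [← lclt_tr_int]
      rfl)
  rw [Metric.tendstoUniformly_iff]
  intro ε hε
  filter_upwards [(hL1.eventually (gt_mem_nhds hε)), eventually_ge_atTop (N + 2)] with n hn hnN v
  obtain ⟨m, rfl⟩ : ∃ m, n = m + 2 := ⟨n - 2, by omega⟩
  have hfour := hcp m (hpow _ (by omega)) (Real.sqrt ((m + 2 : ℕ) : ℝ) • WithLp.toLp 2 v)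
  have hsc := lclt_scale k φ (m + 2) (by omega) (WithLp.toLp 2 v)
  rw [← hfour] at hsc
  have hg := lclt_gauss k C B hB hd v
  have hs : 0 < Real.sqrt ((m + 2 : ℕ) : ℝ) := Real.sqrt_pos.2 (by positivity)
  have hφi : Integrable (fun t => φ ((Real.sqrt ((m + 2 : ℕ) : ℝ))⁻¹ • t) ^ (m + 2)) :=
    (hpow (m + 2) (by omega)).comp_smul (inv_ne_zero hs.ne')
  have hle := lclt_inv_norm_le _ _ hφi hEi (WithLp.toLp 2 v)
  rw [← hsc, hg, ← Complex.ofReal_mul, ← Complex.ofReal_sub, Complex.norm_real] at hle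
  rw [dist_comm, dist_eq_norm]
  exact lt_of_le_of_lt hle hn

end
end
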